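/- Let H : (ℝ_{≥0})^n → ℂ be C^∞ with all partial derivatives of sufficient decay at infinity, k = (k_1,…,k_n) ∈ ℕ^n, and I ⊂ {1,…,n}. Suppose ∂^k H vanishes identically on each hyperplane {y_i = 0} for i ∈ I. Then, with Λ(H,s) = (∏_i 1/Γ(s_i)) ∫_{(ℝ_{≥0})^n} H(y) ∏_i y_i^{s_i−1} dy_i (analytically continued), one has lim_{s → −k} (∏_{i∈I} 1/(s_i + k_i)) Λ(H, s) = ∫_{(ℝ_{≥0})^I} ∂^k H(y_I, 0_{I^c}) ∏_{i∈I} dy_i/y_i, where (y_I, 0_{I^c}) denotes the point with coordinates y_i for i ∈ I and 0 for i ∉ I. -/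

import Mathlib

open scoped BigOperators

/-- The closed positive quadrant `(ℝ_{≥0})^n`. -/
def Quadrant (n : ℕ) : Set (Fin n → ℝ) := {y | ∀ i, 0 ≤ y i}

/-- `F` has *sufficient decay at infinity on `S`*. -/
def SufficientDecayOn (n : ℕ) (S : Set (Fin n → ℝ)) (F : (Fin n → ℝ) → ℂ) : Prop :=
  ∃ (r : ℕ) (G : Fin r → (Fin n → ℝ) → ℂ) (L : Fin r → Fin n → ℝ),
    (∀ i j, L i j ≠ 0) ∧
    (∀ i, ∃ C : ℝ, ∀ y ∈ S, (1 + |∑ j, L i j * y j|) * ‖G i y‖ ≤ C) ∧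
    (∀ y ∈ S, F y = ∑ i, G i y)

/-- The signed partial derivative `-∂/∂y_i`. -/
noncomputable def pderivNeg (n : ℕ) (i : Fin n) (H : (Fin n → ℝ) → ℂ) :
    (Fin n → ℝ) → ℂ :=
  fun y => -(fderiv ℝ H y (Pi.single i 1))

/-- Iterated signed partial derivatives along a list of directions. -/
noncomputable def pderivList (n : ℕ) : List (Fin n) → ((Fin n → ℝ) → ℂ) → (Fin n → ℝ) → ℂ
  | [], H => H
  | (i :: l), H => pderivNeg n i (pderivList n l H)

/-- The multi-index `k = (k_1,…,k_n)` as a list of directions, so that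
`pderivList (multiIndexList k)` is `∂^k = ∏ (-∂/∂y_i)^{k_i}`. -/
def multiIndexList (n : ℕ) (k : Fin n → ℕ) : List (Fin n) :=
  (List.finRange n).flatMap fun i => List.replicate (k i) i

/-!
Write `E_i F = e^{-y_i} F|_{y_i = 0}`. Its normalized Mellin transform does not depend on `s_i`, as
`Γ` cancels, while `F - E_i F` vanishes on `{y_i = 0}`, so that its Mellin integral converges down
to `Re s_i > -1`. This describes the continuation of `Λ(F, ·)` to that range of `s_i`. At `s_i = 0`
the factor `1/Γ(s_i)` kills the second part, so the value there is `Λ(E_i F, ·)`, which is zero if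
`F` vanishes on `{y_i = 0}`. At `s_i - 1`, integration by parts in `y_i` gives
`Λ(F, s - e_i) = Λ(-∂_i F, s)`; iterating, it is enough to treat `k = 0`.

For `k = 0` the continuation is analytic at the origin and vanishes on `{s_i = 0}` for `i ∈ I`, so
it can be divided by `∏_{i ∈ I} s_i` and the limit exists. Its value is computed along
`s_i = x` for `i ∈ I`, `s_i = 0` for `i ∉ I`, with `x ↓ 0`: there `Λ(F, s)` is the normalized Mellin
transform of the restriction of `F` to the face `{y_i = 0, i ∉ I}`, and `x Γ(x) = Γ(x + 1) → 1`.
-/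

open MeasureTheory Set Filter Topology

/-- Lebesgue measure on the orthant `(0, ∞)^ι`, as a product measure. The boundary of the closed
orthant is null, so this is also the restriction of Lebesgue measure to the closed orthant
(`volume_restrict_setOf_nonneg`). -/
noncomputable def orthantMeasure (ι : Type*) [Fintype ι] : Measure (ι → ℝ) :=
  Measure.pi fun _ => volume.restrict (Ioi 0)

instance (ι : Type*) [Fintype ι] : SigmaFinite (orthantMeasure ι) := by
  unfold orthantMeasure; infer_instance

lemma volume_restrict_setOf_nonneg (ι : Type*) [Fintype ι] :
    (volume : Measure (ι → ℝ)).restrict {y | ∀ i, 0 ≤ y i} = orthantMeasure ι := by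
  have hset : {y : ι → ℝ | ∀ i, 0 ≤ y i} = univ.pi fun _ => Ici 0 := by
    ext y; simp only [mem_ofPred_eq, mem_univ_pi, mem_Ici]
  rw [hset, volume_pi, Measure.restrict_pi_pi, orthantMeasure]
  exact congrArg _ (funext fun _ => Measure.restrict_congr_set Ioi_ae_eq_Ici.symm)

lemma ae_orthantMeasure_pos (ι : Type*) [Fintype ι] : ∀ᵐ y ∂orthantMeasure ι, ∀ i, 0 < y i := by
  rw [ae_all_iff]
  exact fun i => (Measure.quasiMeasurePreserving_eval _ i).ae (ae_restrict_mem measurableSet_Ioi)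

section Slicing
variable {n : ℕ} (i : Fin (n + 1))

lemma measurePreserving_insertNth :
    MeasurePreserving (fun p : ℝ × (Fin n → ℝ) => (i.insertNth p.1 p.2 : Fin (n + 1) → ℝ))
      ((volume.restrict (Ioi 0)).prod (orthantMeasure (Fin n))) (orthantMeasure (Fin (n + 1))) :=
  (measurePreserving_piFinSuccAbove (fun _ => volume.restrict (Ioi (0 : ℝ))) i).symm

lemma measurableEmbedding_insertNth :
    MeasurableEmbedding
      (fun p : ℝ × (Fin n → ℝ) => (i.insertNth p.1 p.2 : Fin (n + 1) → ℝ)) :=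
  (MeasurableEquiv.piFinSuccAbove (fun _ => ℝ) i).symm.measurableEmbedding

end Slicing

lemma intervalIntegrable_abs_sub_rpow {τ : ℝ} (hτ : τ < 1) (a b c : ℝ) :
    IntervalIntegrable (fun u : ℝ => |u - c| ^ (-τ)) volume a b := by
  have hloc : LocallyIntegrable fun u : ℝ => |u| ^ (-τ) := by
    refine locallyIntegrable_of_norm_le_rpow (C := 1) (α := τ) (by simp) (by simpa using hτ)
      (.of_forall fun u => ?_) (by fun_prop : Measurable _).aestronglyMeasurable
    rw [one_mul, Real.norm_of_nonneg (by positivity), Real.norm_eq_abs]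
  simpa using (hloc.integrableOn_isCompact
    (isCompact_uIcc (a := a - c) (b := b - c))).intervalIntegrable.comp_sub_right c

section OneVariable
variable {σ τ : ℝ}

lemma integrableOn_Ioc_zero_abs_sub_one_rpow_mul_rpow (hσ : 0 < σ) (hτ : 0 ≤ τ) :
    IntegrableOn (fun u : ℝ => |u - 1| ^ (-τ) * u ^ (σ - 1)) (Ioc 0 (1 / 2)) := by
  have hdom : IntegrableOn (fun u : ℝ => (1 / 2 : ℝ) ^ (-τ) * u ^ (σ - 1)) (Ioc 0 (1 / 2)) :=
    ((intervalIntegrable_iff_integrableOn_Ioc_of_le (by norm_num)).1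
      (intervalIntegral.intervalIntegrable_rpow' (by linarith))).const_mul _
  refine hdom.mono' (by fun_prop : Measurable _).aestronglyMeasurable ?_
  filter_upwards [ae_restrict_mem measurableSet_Ioc] with u hu
  have hfar : 1 / 2 ≤ |u - 1| := by rw [abs_sub_comm]; exact le_abs.2 (.inl (by linarith [hu.2]))
  rw [Real.norm_of_nonneg (mul_nonneg (by positivity) (Real.rpow_nonneg hu.1.le _))]
  exact mul_le_mul_of_nonneg_right
    (Real.rpow_le_rpow_of_nonpos (by norm_num) hfar (by linarith)) (Real.rpow_nonneg hu.1.le _)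

lemma integrableOn_Ioc_half_abs_sub_one_rpow_mul_rpow (hσ : σ ≤ 1) (hτ : τ < 1) :
    IntegrableOn (fun u : ℝ => |u - 1| ^ (-τ) * u ^ (σ - 1)) (Ioc (1 / 2) 2) := by
  have hdom : IntegrableOn (fun u : ℝ => |u - 1| ^ (-τ) * (1 / 2 : ℝ) ^ (σ - 1)) (Ioc (1 / 2) 2) :=
    ((intervalIntegrable_iff_integrableOn_Ioc_of_le (by norm_num)).1
      (intervalIntegrable_abs_sub_rpow hτ _ _ 1)).mul_const _
  refine hdom.mono' (by fun_prop : Measurable _).aestronglyMeasurable ?_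
  filter_upwards [ae_restrict_mem measurableSet_Ioc] with u hu
  have hu0 : 0 < u := by linarith [hu.1]
  rw [Real.norm_of_nonneg (by positivity)]
  exact mul_le_mul_of_nonneg_left
    (Real.rpow_le_rpow_of_nonpos (by norm_num) hu.1.le (by linarith)) (by positivity)

lemma integrableOn_Ioi_two_abs_sub_one_rpow_mul_rpow (hτ : 0 ≤ τ) (hστ : σ < τ) :
    IntegrableOn (fun u : ℝ => |u - 1| ^ (-τ) * u ^ (σ - 1)) (Ioi 2) := by
  have hdom : IntegrableOn (fun u : ℝ => (1 / 2 : ℝ) ^ (-τ) * u ^ (σ - τ - 1)) (Ioi 2) :=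
    (integrableOn_Ioi_rpow_of_lt (by linarith) two_pos).const_mul _
  refine hdom.mono' (by fun_prop : Measurable _).aestronglyMeasurable ?_
  filter_upwards [ae_restrict_mem measurableSet_Ioi] with u (hu : 2 < u)
  have hu0 : 0 < u := by linarith
  have hfar : 1 / 2 * u ≤ |u - 1| := le_abs.2 (.inl (by linarith))
  rw [Real.norm_of_nonneg (by positivity)]
  calc |u - 1| ^ (-τ) * u ^ (σ - 1) ≤ (1 / 2 * u) ^ (-τ) * u ^ (σ - 1) :=
        mul_le_mul_of_nonneg_right
          (Real.rpow_le_rpow_of_nonpos (by positivity) hfar (by linarith)) (by positivity)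
    _ = (1 / 2 : ℝ) ^ (-τ) * u ^ (σ - τ - 1) := by
        rw [Real.mul_rpow (by norm_num) hu0.le, mul_assoc, ← Real.rpow_add hu0]
        ring_nf

lemma integrableOn_abs_sub_one_rpow_mul_rpow (hσ : 0 < σ) (hστ : σ < τ) (hτ : τ < 1) :
    IntegrableOn (fun u : ℝ => |u - 1| ^ (-τ) * u ^ (σ - 1)) (Ioi 0) := by
  have hτ0 : 0 ≤ τ := (hσ.trans hστ).le
  rw [← Ioc_union_Ioi_eq_Ioi (zero_le_two (α := ℝ)),
    ← Ioc_union_Ioc_eq_Ioc (by norm_num : (0 : ℝ) ≤ 1 / 2) (by norm_num : (1 / 2 : ℝ) ≤ 2)]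
  exact ((integrableOn_Ioc_zero_abs_sub_one_rpow_mul_rpow hσ hτ0).union
    (integrableOn_Ioc_half_abs_sub_one_rpow_mul_rpow (hστ.trans hτ).le hτ)).union
      (integrableOn_Ioi_two_abs_sub_one_rpow_mul_rpow hτ0 hστ)

end OneVariable

lemma abs_abs_mul_sub_le (a c : ℝ) {x : ℝ} (hx : 0 ≤ x) :
    |(|a| * x - (1 + |c|))| ≤ 1 + |a * x + c| := by
  have h : |(|a * x| - |c|)| ≤ |a * x + c| := by
    simpa using abs_abs_sub_abs_le (a * x) (-c)
  rw [abs_mul, abs_of_nonneg hx] at h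
  rw [abs_le] at h ⊢
  constructor <;> linarith

lemma abs_mul_sub_rpow_mul_rpow_eq {a R x : ℝ} (ha : 0 < a) (hR : 0 < R) (hx : 0 < x) (σ τ : ℝ) :
    |a * x - R| ^ (-τ) * x ^ (σ - 1) =
      R ^ (-τ) * (a / R) ^ (1 - σ) * (|a / R * x - 1| ^ (-τ) * (a / R * x) ^ (σ - 1)) := by
  have hfactor : a * x - R = R * (a / R * x - 1) := by field_simp
  have hcancel : (a / R) ^ (1 - σ) * (a / R) ^ (σ - 1) = 1 := by
    rw [← Real.rpow_add (by positivity), sub_add_sub_cancel, sub_self, Real.rpow_zero]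
  rw [hfactor, abs_mul, abs_of_pos hR, Real.mul_rpow hR.le (abs_nonneg _),
    Real.mul_rpow (by positivity) hx.le]
  linear_combination -(R ^ (-τ) * |a / R * x - 1| ^ (-τ) * x ^ (σ - 1)) * hcancel

lemma integrableOn_abs_mul_sub_rpow_mul_rpow {a R σ τ : ℝ} (ha : 0 < a) (hR : 0 < R) (hσ : 0 < σ)
    (hστ : σ < τ) (hτ : τ < 1) :
    IntegrableOn (fun x : ℝ => |a * x - R| ^ (-τ) * x ^ (σ - 1)) (Ioi 0) := by
  have h := integrableOn_abs_sub_one_rpow_mul_rpow hσ hστ hτ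
  rw [← mul_zero (a / R), ← integrableOn_Ioi_comp_mul_left_iff _ 0 (div_pos ha hR)] at h
  exact IntegrableOn.congr_fun (h.const_mul _)
    (fun x hx => (abs_mul_sub_rpow_mul_rpow_eq ha hR hx σ τ).symm) measurableSet_Ioi

lemma integral_abs_mul_sub_rpow_mul_rpow {a R : ℝ} (ha : 0 < a) (hR : 0 < R) (σ τ : ℝ) :
    ∫ x in Ioi (0 : ℝ), |a * x - R| ^ (-τ) * x ^ (σ - 1) =
      a ^ (-σ) * (∫ u in Ioi (0 : ℝ), |u - 1| ^ (-τ) * u ^ (σ - 1)) * R ^ (σ - τ) := by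
  rw [setIntegral_congr_fun measurableSet_Ioi fun x hx =>
      abs_mul_sub_rpow_mul_rpow_eq ha hR hx σ τ, integral_const_mul,
    integral_comp_mul_left_Ioi (fun u : ℝ => |u - 1| ^ (-τ) * u ^ (σ - 1)) 0 (div_pos ha hR),
    mul_zero, smul_eq_mul, Real.rpow_sub (by positivity), Real.rpow_one, Real.rpow_sub hR,
    Real.div_rpow ha.le hR.le, Real.rpow_neg hR.le, Real.rpow_neg ha.le]
  field_simp

lemma lintegral_one_add_abs_rpow_mul_rpow_le {a σ τ : ℝ} (ha : a ≠ 0) (hσ : 0 < σ) (hστ : σ < τ)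
    (hτ : τ < 1) : ∃ K : ℝ, 0 ≤ K ∧ ∀ c : ℝ,
      ∫⁻ x in Ioi (0 : ℝ), ENNReal.ofReal ((1 + |a * x + c|) ^ (-τ) * x ^ (σ - 1)) ≤
        ENNReal.ofReal (K * (1 + |c|) ^ (σ - τ)) := by
  have ha' : 0 < |a| := abs_pos.2 ha
  refine ⟨|a| ^ (-σ) * ∫ u in Ioi (0 : ℝ), |u - 1| ^ (-τ) * u ^ (σ - 1),
    mul_nonneg (by positivity) (setIntegral_nonneg measurableSet_Ioi fun u (hu : 0 < u) => by
      positivity), fun c => ?_⟩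
  have hR : 0 < 1 + |c| := by positivity
  rw [← integral_abs_mul_sub_rpow_mul_rpow ha' hR, ofReal_integral_eq_lintegral_ofReal
    (integrableOn_abs_mul_sub_rpow_mul_rpow ha' hR hσ hστ hτ)
    ((ae_restrict_mem measurableSet_Ioi).mono fun x (hx : 0 < x) => by
      simp only [Pi.zero_apply]; positivity)]
  refine lintegral_mono_ae ?_
  filter_upwards [ae_restrict_mem measurableSet_Ioi,
    ae_restrict_of_ae (Measure.ae_ne volume ((1 + |c|) / |a|))] with x (hx : 0 < x) hne
  have hpos : 0 < |(|a| * x - (1 + |c|))| :=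
    abs_pos.2 (sub_ne_zero.2 fun h => hne (by rw [← h]; field_simp))
  gcongr ENNReal.ofReal (?_ * _)
  exact Real.rpow_le_rpow_of_nonpos hpos (abs_abs_mul_sub_le a c hx.le) (by linarith)

lemma lintegral_orthant_one_add_abs_rpow_mul_prod_le :
    ∀ {n : ℕ} {L σ : Fin n → ℝ} {τ : ℝ}, (∀ i, L i ≠ 0) → (∀ i, 0 < σ i) → ∑ i, σ i < τ →
      τ < 1 → ∃ K : ℝ, 0 ≤ K ∧ ∀ c : ℝ,
        ∫⁻ y, ENNReal.ofReal ((1 + |∑ i, L i * y i + c|) ^ (-τ) * ∏ i, y i ^ (σ i - 1))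
            ∂orthantMeasure (Fin n) ≤ ENNReal.ofReal (K * (1 + |c|) ^ (∑ i, σ i - τ))
  | 0, L, σ, τ, _, _, _, _ => by
    refine ⟨1, zero_le_one, fun c => ?_⟩
    simp [orthantMeasure]
  | n + 1, L, σ, τ, hL, hσ, hστ, hτ => by
    rw [Fin.sum_univ_succ] at hστ
    have htail : 0 ≤ ∑ i : Fin n, σ i.succ := Finset.sum_nonneg fun i _ => (hσ _).le
    obtain ⟨K, hK, hslice⟩ :=
      lintegral_one_add_abs_rpow_mul_rpow_le (hL 0) (hσ 0) (by linarith) hτ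
    obtain ⟨K', hK', ih⟩ := lintegral_orthant_one_add_abs_rpow_mul_prod_le (τ := τ - σ 0)
      (fun i => hL i.succ) (fun i => hσ i.succ) (by linarith) (by linarith [hσ 0])
    refine ⟨K * K', by positivity, fun c => ?_⟩
    -- Integrating out the coordinate `y_0` lowers the exponent `τ` by `σ_0`.
    rw [← (measurePreserving_insertNth 0).map_eq,
      (measurableEmbedding_insertNth 0).lintegral_map, lintegral_prod_symm' _ (by fun_prop)]
    calc _ ≤ ∫⁻ z, ENNReal.ofReal (K * ((1 + |∑ i, L i.succ * z i + c|) ^ (-(τ - σ 0)) *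
            ∏ i, z i ^ (σ i.succ - 1))) ∂orthantMeasure (Fin n) := by
          refine lintegral_mono_ae ?_
          filter_upwards [ae_orthantMeasure_pos (Fin n)] with z hz
          have hprod : 0 ≤ ∏ i, z i ^ (σ i.succ - 1) :=
            Finset.prod_nonneg fun i _ => Real.rpow_nonneg (hz i).le _
          rw [neg_sub, ← mul_assoc, ENNReal.ofReal_mul' hprod]
          refine le_trans (le_of_eq ?_) (mul_le_mul_left (hslice (∑ i, L i.succ * z i + c)) _)
          rw [← lintegral_mul_const _ (by fun_prop)]
          refine lintegral_congr fun x => ?_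
          simp only [Fin.sum_univ_succ, Fin.prod_univ_succ, Fin.insertNth_zero', Fin.cons_zero,
            Fin.cons_succ, ← ENNReal.ofReal_mul' hprod, add_assoc, mul_assoc]
      _ ≤ ENNReal.ofReal (K * K' * (1 + |c|) ^ (∑ i, σ i - τ)) := by
          simp_rw [ENNReal.ofReal_mul hK]
          rw [lintegral_const_mul _ (by fun_prop), mul_assoc, ENNReal.ofReal_mul hK,
            Fin.sum_univ_succ, add_comm (σ 0), add_sub_assoc, ← neg_sub τ, ← sub_eq_add_neg]
          gcongr
          exact ih c

lemma integrable_inv_one_add_abs_mul_prod {n : ℕ} {L σ : Fin n → ℝ} (hL : ∀ i, L i ≠ 0)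
    (hσ : ∀ i, 0 < σ i) (hσ1 : ∑ i, σ i < 1) :
    Integrable (fun y => (1 + |∑ i, L i * y i|)⁻¹ * ∏ i, y i ^ (σ i - 1))
      (orthantMeasure (Fin n)) := by
  obtain ⟨τ, hστ, hτ⟩ := exists_between hσ1
  obtain ⟨K, -, hK⟩ := lintegral_orthant_one_add_abs_rpow_mul_prod_le hL hσ hστ hτ
  refine ⟨(by fun_prop : Measurable _).aestronglyMeasurable, ?_⟩
  refine (lintegral_mono_ae ?_).trans_lt ((hK 0).trans_lt ENNReal.ofReal_lt_top)
  filter_upwards [ae_orthantMeasure_pos (Fin n)] with y hy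
  have hprod : 0 ≤ ∏ i, y i ^ (σ i - 1) :=
    Finset.prod_nonneg fun i _ => Real.rpow_nonneg (hy i).le _
  rw [add_zero, ← ofReal_norm, Real.norm_of_nonneg (by positivity), ← Real.rpow_neg_one]
  gcongr
  · linarith [abs_nonneg (∑ i, L i * y i)]

lemma inv_one_add_abs_add_le (a b x : ℝ) :
    (1 + |a + b * x|)⁻¹ ≤ (1 + |b|) * (1 + |x|) * (1 + |a|)⁻¹ := by
  have htri : |a| ≤ |a + b * x| + |b| * |x| := by
    simpa [abs_mul] using abs_sub (a + b * x) (b * x)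
  rw [← div_eq_mul_inv, inv_le_comm₀ (by positivity) (by positivity), inv_div,
    div_le_iff₀ (by positivity)]
  nlinarith [abs_nonneg b, abs_nonneg x, abs_nonneg (a + b * x), mul_nonneg (abs_nonneg b)
    (abs_nonneg x), mul_nonneg (abs_nonneg (a + b * x)) (mul_nonneg (abs_nonneg b) (abs_nonneg x)),
    mul_nonneg (abs_nonneg (a + b * x)) (abs_nonneg b),
    mul_nonneg (abs_nonneg (a + b * x)) (abs_nonneg x)]

section DecayingFunctions
variable {n : ℕ}

/-- Nonnegative combinations of the weights `(1 + |∑ L_j y_j|)⁻¹` with all `L_j ≠ 0`. These are the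
bounds that `SufficientDecayOn` provides. -/
inductive IsDecayWeight : ((Fin n → ℝ) → ℝ) → Prop
  | zero : IsDecayWeight fun _ => 0
  | inv_one_add_abs {L : Fin n → ℝ} (hL : ∀ j, L j ≠ 0) :
      IsDecayWeight fun y => (1 + |∑ j, L j * y j|)⁻¹
  | const_mul {W : (Fin n → ℝ) → ℝ} {c : ℝ} (hc : 0 ≤ c) (hW : IsDecayWeight W) :
      IsDecayWeight fun y => c * W y
  | add {V W : (Fin n → ℝ) → ℝ} (hV : IsDecayWeight V) (hW : IsDecayWeight W) :
      IsDecayWeight fun y => V y + W y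

namespace IsDecayWeight
variable {W : (Fin n → ℝ) → ℝ}

lemma nonneg (hW : IsDecayWeight W) (y : Fin n → ℝ) : 0 ≤ W y := by
  induction hW with
  | zero => exact le_rfl
  | inv_one_add_abs => positivity
  | const_mul hc _ ih => exact mul_nonneg hc ih
  | add _ _ ihV ihW => exact add_nonneg ihV ihW

lemma sum {κ : Type*} (s : Finset κ) {V : κ → (Fin n → ℝ) → ℝ}
    (hV : ∀ a ∈ s, IsDecayWeight (V a)) : IsDecayWeight fun y => ∑ a ∈ s, V a y := by
  induction s using Finset.cons_induction with
  | empty => exact zero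
  | cons a s ha ih =>
    simp only [Finset.sum_cons]
    exact (hV a (Finset.mem_cons_self a s)).add (ih fun b hb => hV b (Finset.mem_cons_of_mem hb))

lemma exists_le (hW : IsDecayWeight W) : ∃ B, ∀ y, W y ≤ B := by
  induction hW with
  | zero => exact ⟨0, fun _ => le_rfl⟩
  | inv_one_add_abs => exact ⟨1, fun y => inv_le_one_of_one_le₀ (by simp)⟩
  | const_mul hc _ ih =>
    obtain ⟨B, hB⟩ := ih
    exact ⟨_, fun y => mul_le_mul_of_nonneg_left (hB y) hc⟩
  | add _ _ ihV ihW =>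
    obtain ⟨A, hA⟩ := ihV
    obtain ⟨B, hB⟩ := ihW
    exact ⟨_, fun y => add_le_add (hA y) (hB y)⟩

lemma exists_update_le (hW : IsDecayWeight W) (i : Fin n) :
    ∃ K, 0 ≤ K ∧ ∀ y t, W (Function.update y i t) ≤ K * (1 + |t - y i|) * W y := by
  induction hW with
  | zero => exact ⟨0, le_rfl, by simp⟩
  | @inv_one_add_abs L _ =>
    refine ⟨1 + |L i|, by positivity, fun y t => ?_⟩
    have hsum : ∑ j, L j * Function.update y i t j = ∑ j, L j * y j + L i * (t - y i) := by
      rw [← sub_eq_iff_eq_add', ← Finset.sum_sub_distrib, Finset.sum_eq_single i] <;>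
        simp +contextual [mul_sub]
    simp only [hsum]
    exact inv_one_add_abs_add_le _ _ _
  | const_mul hc _ ih =>
    obtain ⟨K, hK, h⟩ := ih
    refine ⟨K, hK, fun y t => (mul_le_mul_of_nonneg_left (h y t) hc).trans_eq ?_⟩
    ring
  | add hV hW ihV ihW =>
    obtain ⟨K, hK, h⟩ := ihV
    obtain ⟨K', hK', h'⟩ := ihW
    refine ⟨K + K', by positivity, fun y t => (add_le_add (h y t) (h' y t)).trans ?_⟩
    nlinarith [mul_nonneg (mul_nonneg hK (by positivity : 0 ≤ 1 + |t - y i|)) (hW.nonneg y),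
      mul_nonneg (mul_nonneg hK' (by positivity : 0 ≤ 1 + |t - y i|)) (hV.nonneg y)]

lemma integrable_mul_prod_rpow (hW : IsDecayWeight W) {σ : Fin n → ℝ} (hσ : ∀ i, 0 < σ i)
    (hσ1 : ∑ i, σ i < 1) :
    Integrable (fun y => W y * ∏ i, y i ^ (σ i - 1)) (orthantMeasure (Fin n)) := by
  induction hW with
  | zero => simp
  | inv_one_add_abs hL => exact integrable_inv_one_add_abs_mul_prod hL hσ hσ1
  | const_mul _ _ ih => simpa only [mul_assoc] using ih.const_mul _
  | add _ _ ihV ihW => exact (ihV.add ihW).congr (.of_forall fun y => (add_mul _ _ _).symm)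

end IsDecayWeight

/-- Sufficient decay on the orthant, phrased as a bound by a decay weight. -/
def HasDecay (F : (Fin n → ℝ) → ℂ) : Prop :=
  ∃ W : (Fin n → ℝ) → ℝ, IsDecayWeight W ∧ ∀ y ∈ Quadrant n, ‖F y‖ ≤ W y

lemma SufficientDecayOn.hasDecay {F : (Fin n → ℝ) → ℂ}
    (hF : SufficientDecayOn n (Quadrant n) F) : HasDecay F := by
  obtain ⟨r, G, L, hL, hbound, hsum⟩ := hF
  choose C hC using hbound
  refine ⟨fun y => ∑ i, |C i| * (1 + |∑ j, L i j * y j|)⁻¹,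
    .sum _ fun i _ => .const_mul (abs_nonneg _) (.inv_one_add_abs (hL i)), fun y hy => ?_⟩
  rw [hsum y hy]
  refine (norm_sum_le _ _).trans (Finset.sum_le_sum fun i _ => ?_)
  rw [← div_eq_mul_inv, le_div_iff₀' (by positivity)]
  exact (hC i y hy).trans (le_abs_self _)

lemma HasDecay.sub {F G : (Fin n → ℝ) → ℂ} (hF : HasDecay F) (hG : HasDecay G) :
    HasDecay (F - G) := by
  obtain ⟨V, hV, hFV⟩ := hF
  obtain ⟨W, hW, hGW⟩ := hG
  exact ⟨_, hV.add hW, fun y hy => (norm_sub_le _ _).trans (add_le_add (hFV y hy) (hGW y hy))⟩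

section PartialDerivatives
variable {F G : (Fin n → ℝ) → ℂ}

lemma hasDerivAt_comp_update (hF : Differentiable ℝ F) (i : Fin n) (y : Fin n → ℝ) (t : ℝ) :
    HasDerivAt (fun x => F (Function.update y i x))
      (-pderivNeg n i F (Function.update y i t)) t := by
  rw [pderivNeg, neg_neg]
  exact (hF _).hasFDerivAt.comp_hasDerivAt t (hasDerivAt_update y i t)

lemma pderivNeg_eq_of_hasDerivAt (hF : Differentiable ℝ F) {i : Fin n} {y : Fin n → ℝ} {d : ℂ}
    (h : HasDerivAt (fun x => F (Function.update y i x)) (-d) (y i)) : pderivNeg n i F y = d := by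
  simpa using (hasDerivAt_comp_update hF i y (y i)).unique h

lemma pderivNeg_sub (hF : Differentiable ℝ F) (hG : Differentiable ℝ G) (i : Fin n) :
    pderivNeg n i (F - G) = pderivNeg n i F - pderivNeg n i G := by
  ext y
  simp only [pderivNeg, Pi.sub_apply, fderiv_sub (hF y) (hG y), sub_apply]
  ring

lemma contDiff_pderivNeg (hF : ContDiff ℝ (⊤ : ℕ∞) F) (i : Fin n) :
    ContDiff ℝ (⊤ : ℕ∞) (pderivNeg n i F) :=
  ((hF.fderiv_right (by simp)).clm_apply contDiff_const).neg

lemma contDiff_pderivList (hF : ContDiff ℝ (⊤ : ℕ∞) F) :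
    ∀ l : List (Fin n), ContDiff ℝ (⊤ : ℕ∞) (pderivList n l F)
  | [] => hF
  | i :: l => contDiff_pderivNeg (contDiff_pderivList hF l) i

lemma pderivList_append (F : (Fin n → ℝ) → ℂ) (l l' : List (Fin n)) :
    pderivList n (l ++ l') F = pderivList n l (pderivList n l' F) := by
  induction l with
  | nil => rfl
  | cons i l ih => simp only [List.cons_append, pderivList, ih]

lemma pderivList_sub (hF : ContDiff ℝ (⊤ : ℕ∞) F) (hG : ContDiff ℝ (⊤ : ℕ∞) G) (l : List (Fin n)) :
    pderivList n l (F - G) = pderivList n l F - pderivList n l G := by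
  induction l with
  | nil => rfl
  | cons i l ih =>
    rw [pderivList, ih, pderivNeg_sub ((contDiff_pderivList hF l).differentiable (by simp))
      ((contDiff_pderivList hG l).differentiable (by simp))]
    rfl

end PartialDerivatives

/-- The functions whose Mellin transforms are studied: smooth, with all partial derivatives of
sufficient decay on the orthant. -/
structure DecayingSmooth (F : (Fin n → ℝ) → ℂ) : Prop where
  contDiff : ContDiff ℝ (⊤ : ℕ∞) F
  hasDecay_pderivList : ∀ l : List (Fin n), HasDecay (pderivList n l F)

namespace DecayingSmooth
variable {F G : (Fin n → ℝ) → ℂ}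

lemma hasDecay (hF : DecayingSmooth F) : HasDecay F := hF.hasDecay_pderivList []

lemma differentiable (hF : DecayingSmooth F) : Differentiable ℝ F :=
  hF.contDiff.differentiable (by simp)

lemma sub (hF : DecayingSmooth F) (hG : DecayingSmooth G) : DecayingSmooth (F - G) where
  contDiff := hF.contDiff.sub hG.contDiff
  hasDecay_pderivList l := by
    rw [pderivList_sub hF.contDiff hG.contDiff]
    exact (hF.hasDecay_pderivList l).sub (hG.hasDecay_pderivList l)

lemma pderivList (hF : DecayingSmooth F) (l : List (Fin n)) :
    DecayingSmooth (pderivList n l F) where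
  contDiff := contDiff_pderivList hF.contDiff l
  hasDecay_pderivList l' := by
    rw [← pderivList_append]
    exact hF.hasDecay_pderivList _

lemma pderivNeg (hF : DecayingSmooth F) (i : Fin n) : DecayingSmooth (pderivNeg n i F) :=
  hF.pderivList [i]

end DecayingSmooth

/-- The restriction of `F` to the coordinate face `{y_j = 0, j ∈ J}`, extended back to all of space
with the factor `∏_{j ∈ J} e^{-y_j}`, whose normalized Mellin transform is `1`. -/
noncomputable def expTrace (J : Finset (Fin n)) (F : (Fin n → ℝ) → ℂ) (y : Fin n → ℝ) : ℂ :=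
  (∏ j ∈ J, (Real.exp (-y j) : ℂ)) * F (J.piecewise 0 y)

section ExpTrace
variable {F : (Fin n → ℝ) → ℂ} {i : Fin n}

lemma expTrace_empty (F : (Fin n → ℝ) → ℂ) : expTrace ∅ F = F := by
  ext y
  simp [expTrace]

lemma expTrace_singleton_apply (i : Fin n) (F : (Fin n → ℝ) → ℂ) (y : Fin n → ℝ) :
    expTrace {i} F y = Real.exp (-y i) * F (Function.update y i 0) := by
  simp [expTrace, Finset.piecewise_singleton]

lemma expTrace_insert {J : Finset (Fin n)} (hi : i ∉ J) (F : (Fin n → ℝ) → ℂ) :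
    expTrace (insert i J) F = expTrace {i} (expTrace J F) := by
  ext y
  have hprod : ∏ j ∈ J, (Real.exp (-Function.update y i 0 j) : ℂ) =
      ∏ j ∈ J, (Real.exp (-y j) : ℂ) :=
    Finset.prod_congr rfl fun j hj => by rw [Function.update_of_ne (ne_of_mem_of_not_mem hj hi)]
  have hface : (insert i J).piecewise 0 y = J.piecewise 0 (Function.update y i 0) := by
    rw [Finset.piecewise_insert]
    exact J.update_piecewise_of_notMem 0 y hi 0
  rw [expTrace_singleton_apply, expTrace, expTrace, Finset.prod_insert hi, hprod, hface, mul_assoc]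

lemma contDiff_expTrace_singleton (hF : ContDiff ℝ (⊤ : ℕ∞) F) (i : Fin n) :
    ContDiff ℝ (⊤ : ℕ∞) (expTrace {i} F) := by
  have hupdate : ContDiff ℝ (⊤ : ℕ∞) fun y : Fin n → ℝ => Function.update y i 0 := by
    refine contDiff_pi.2 fun j => ?_
    obtain rfl | hj := eq_or_ne j i
    · simpa using contDiff_const
    · simpa [hj] using contDiff_apply ℝ ℝ j
  have hexp : ContDiff ℝ (⊤ : ℕ∞) fun y : Fin n → ℝ => (Real.exp (-y i) : ℂ) :=
    Complex.ofRealCLM.contDiff.comp (contDiff_apply ℝ ℝ i).neg.exp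
  exact (funext (expTrace_singleton_apply i F)) ▸ hexp.mul (hF.comp hupdate)

lemma pderivNeg_expTrace_self (hF : ContDiff ℝ (⊤ : ℕ∞) F) (i : Fin n) :
    pderivNeg n i (expTrace {i} F) = expTrace {i} F := by
  ext y
  refine pderivNeg_eq_of_hasDerivAt ((contDiff_expTrace_singleton hF i).differentiable (by simp)) ?_
  simp only [expTrace_singleton_apply, Function.update_self, Function.update_idem]
  have hexp : HasDerivAt (fun x : ℝ => Real.exp (-x)) (-Real.exp (-y i)) (y i) := by
    simpa using (hasDerivAt_neg (y i)).exp
  simpa using hexp.ofReal_comp.mul_const (F (Function.update y i 0))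

lemma pderivNeg_expTrace_of_ne (hF : ContDiff ℝ (⊤ : ℕ∞) F) {j : Fin n} (hji : j ≠ i) :
    pderivNeg n j (expTrace {i} F) = expTrace {i} (pderivNeg n j F) := by
  ext y
  refine pderivNeg_eq_of_hasDerivAt ((contDiff_expTrace_singleton hF i).differentiable (by simp)) ?_
  have hface : Function.update (Function.update y i 0) j (y j) = Function.update y i 0 := by
    rw [Function.update_comm hji.symm, Function.update_eq_self]
  have h := (hasDerivAt_comp_update (hF.differentiable (by simp)) j
    (Function.update y i 0) (y j)).const_mul (Real.exp (-y i) : ℂ)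
  rw [hface, mul_neg] at h
  simpa only [expTrace_singleton_apply, Function.update_of_ne hji.symm,
    Function.update_comm hji] using h

lemma pderivList_expTrace_singleton (hF : ContDiff ℝ (⊤ : ℕ∞) F) (i : Fin n) (l : List (Fin n)) :
    pderivList n l (expTrace {i} F) = expTrace {i} (pderivList n (l.filter (· ≠ i)) F) := by
  induction l with
  | nil => rfl
  | cons j l ih =>
    have hl := contDiff_pderivList hF (l.filter (· ≠ i))
    rw [pderivList, ih]
    obtain rfl | hji := eq_or_ne j i
    · rw [pderivNeg_expTrace_self hl, List.filter_cons_of_neg (by simp)]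
    · rw [pderivNeg_expTrace_of_ne hl hji, List.filter_cons_of_pos (by simpa), pderivList]

lemma update_mem_quadrant {y : Fin n → ℝ} (hy : y ∈ Quadrant n) (i : Fin n) {t : ℝ} (ht : 0 ≤ t) :
    Function.update y i t ∈ Quadrant n := fun j => by
  obtain rfl | hj := eq_or_ne j i
  · simpa using ht
  · simpa [hj] using hy j

lemma HasDecay.expTrace_singleton (hF : HasDecay F) (i : Fin n) : HasDecay (expTrace {i} F) := by
  obtain ⟨W, hW, hFW⟩ := hF
  obtain ⟨K, hK, hupdate⟩ := hW.exists_update_le i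
  refine ⟨_, hW.const_mul hK, fun y hy => ?_⟩
  have hexp : Real.exp (-y i) * (1 + y i) ≤ 1 := by
    rw [Real.exp_neg, inv_mul_le_one₀ (Real.exp_pos _), add_comm]
    exact Real.add_one_le_exp _
  have hupd : W (Function.update y i 0) ≤ K * (1 + y i) * W y := by
    simpa [abs_of_nonneg (hy i)] using hupdate y 0
  calc ‖expTrace {i} F y‖ = Real.exp (-y i) * ‖F (Function.update y i 0)‖ := by
        rw [expTrace_singleton_apply, norm_mul, Complex.norm_real,
          Real.norm_of_nonneg (Real.exp_pos _).le]
    _ ≤ Real.exp (-y i) * (K * (1 + y i) * W y) := by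
        gcongr
        exact (hFW _ (update_mem_quadrant hy i le_rfl)).trans hupd
    _ = Real.exp (-y i) * (1 + y i) * (K * W y) := by ring
    _ ≤ K * W y := mul_le_of_le_one_left (mul_nonneg hK (hW.nonneg y)) hexp

lemma DecayingSmooth.expTrace (hF : DecayingSmooth F) (J : Finset (Fin n)) :
    DecayingSmooth (expTrace J F) := by
  induction J using Finset.induction_on with
  | empty => rwa [expTrace_empty]
  | insert i J hi ih =>
    rw [expTrace_insert hi]
    refine ⟨contDiff_expTrace_singleton ih.contDiff i, fun l => ?_⟩
    rw [pderivList_expTrace_singleton ih.contDiff]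
    exact (ih.hasDecay_pderivList _).expTrace_singleton i

end ExpTrace

/-- `F` vanishes identically on the coordinate hyperplane `{y_i = 0}`. -/
def VanishesOnHyperplane (i : Fin n) (F : (Fin n → ℝ) → ℂ) : Prop :=
  ∀ y : Fin n → ℝ, y i = 0 → F y = 0

namespace VanishesOnHyperplane
variable {F : (Fin n → ℝ) → ℂ} {i j : Fin n}

lemma pderivNeg (h : VanishesOnHyperplane i F) (hF : Differentiable ℝ F) (hij : i ≠ j) :
    VanishesOnHyperplane i (pderivNeg n j F) := fun y hy => by
  have hzero : (fun x => F (Function.update y j x)) = fun _ => 0 :=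
    funext fun x => h _ (by rwa [Function.update_of_ne hij])
  refine pderivNeg_eq_of_hasDerivAt hF ?_
  rw [hzero, neg_zero]
  exact hasDerivAt_const _ _

lemma expTrace (h : VanishesOnHyperplane i F) (J : Finset (Fin n)) :
    VanishesOnHyperplane i (expTrace J F) := fun y hy => by
  have hface : J.piecewise 0 y i = 0 := by
    by_cases hi : i ∈ J <;> simp [hi, hy]
  rw [_root_.expTrace, h _ hface, mul_zero]

lemma expTrace_singleton_eq_zero (h : VanishesOnHyperplane i F) : _root_.expTrace {i} F = 0 := by
  ext y
  rw [expTrace_singleton_apply, h _ (Function.update_self ..), mul_zero, Pi.zero_apply]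

lemma sub_expTrace_singleton (i : Fin n) (F : (Fin n → ℝ) → ℂ) :
    VanishesOnHyperplane i (F - _root_.expTrace {i} F) := fun y hy => by
  have hy' : Function.update y i 0 = y := Function.update_eq_self_iff.2 hy.symm
  simp [expTrace_singleton_apply, hy', hy]

end VanishesOnHyperplane

lemma norm_le_mul_min_one {E : Type*} [NormedAddCommGroup E] [NormedSpace ℝ E] {g g' : ℝ → E}
    {A x : ℝ} (hx : 0 ≤ x) (hg : ∀ t, HasDerivAt g (g' t) t) (h0 : g 0 = 0) (hA : ‖g x‖ ≤ A)
    (hA' : x < 1 → ∀ t ∈ Icc 0 x, ‖g' t‖ ≤ A) : ‖g x‖ ≤ A * min 1 x := by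
  rcases le_or_gt 1 x with hx1 | hx1
  · rwa [min_eq_left hx1, mul_one]
  · simpa [min_eq_right hx1.le, h0, abs_of_nonneg hx] using
      (convex_Icc 0 x).norm_image_sub_le_of_norm_hasDerivWithin_le
        (fun t _ => (hg t).hasDerivWithinAt) (hA' hx1) (left_mem_Icc.2 hx) (right_mem_Icc.2 hx)

lemma DecayingSmooth.exists_norm_le_mul_prod_min {I : Finset (Fin n)} {F : (Fin n → ℝ) → ℂ}
    (hF : DecayingSmooth F) (hI : ∀ i ∈ I, VanishesOnHyperplane i F) :
    ∃ W : (Fin n → ℝ) → ℝ, IsDecayWeight W ∧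
      ∀ y ∈ Quadrant n, ‖F y‖ ≤ W y * ∏ i ∈ I, min 1 (y i) := by
  induction I using Finset.induction_on generalizing F with
  | empty => simpa [HasDecay] using hF.hasDecay
  | insert i I hi ih =>
    rw [Finset.forall_mem_insert] at hI
    obtain ⟨W, hW, hFW⟩ := ih hF hI.2
    obtain ⟨V, hV, hFV⟩ := ih (hF.pderivNeg i) fun j hj =>
      (hI.2 j hj).pderivNeg hF.differentiable (ne_of_mem_of_not_mem hj hi)
    obtain ⟨K, hK, hupdate⟩ := hV.exists_update_le i
    refine ⟨_, hW.add (hV.const_mul (c := 2 * K) (by positivity)), fun y hy => ?_⟩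
    have hM : 0 ≤ ∏ j ∈ I, min 1 (y j) := Finset.prod_nonneg fun j _ => le_min zero_le_one (hy j)
    have hline := norm_le_mul_min_one (A := (W y + 2 * K * V y) * ∏ j ∈ I, min 1 (y j)) (hy i)
      (hasDerivAt_comp_update hF.differentiable i y) (hI.1 _ (Function.update_self ..))
    rw [Function.update_eq_self] at hline
    rw [Finset.prod_insert hi, mul_comm (min 1 (y i)), ← mul_assoc]
    refine hline ((hFW y hy).trans ?_) fun hyi t ht => ?_
    · gcongr
      exact le_add_of_nonneg_right (mul_nonneg (by positivity) (hV.nonneg y))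
    · have hprod : ∏ j ∈ I, min 1 (Function.update y i t j) = ∏ j ∈ I, min 1 (y j) :=
        Finset.prod_congr rfl fun j hj => by
          rw [Function.update_of_ne (ne_of_mem_of_not_mem hj hi)]
      have hdist : 1 + |t - y i| ≤ 2 := by
        rw [abs_of_nonpos (by linarith [ht.2])]
        linarith [ht.1]
      have hVt : V (Function.update y i t) ≤ W y + 2 * K * V y := by
        nlinarith [hupdate y t, mul_nonneg hK (hV.nonneg y), hW.nonneg y]
      rw [norm_neg]
      refine (hFV _ (update_mem_quadrant hy i ht.1)).trans ?_
      rw [hprod]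
      gcongr

end DecayingFunctions

lemma abs_mul_exp_mul_le {δ x x₀ t : ℝ} (hδ : 0 < δ) (hx : |x - x₀| ≤ δ) :
    |t| * Real.exp (x * t) ≤
      δ⁻¹ * (Real.exp ((x₀ + 2 * δ) * t) + Real.exp ((x₀ - 2 * δ) * t)) := by
  have hlin : δ * |t| ≤ Real.exp (δ * |t|) := by linarith [Real.add_one_le_exp (δ * |t|)]
  have hshift : x * t ≤ x₀ * t + δ * |t| := by
    have : (x - x₀) * t ≤ δ * |t| :=
      (le_abs_self _).trans (by rw [abs_mul]; gcongr)
    linarith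
  rw [inv_mul_eq_div, le_div_iff₀' hδ, ← mul_assoc]
  calc δ * |t| * Real.exp (x * t)
      ≤ Real.exp (δ * |t|) * Real.exp (x₀ * t + δ * |t|) := by gcongr
    _ = Real.exp (x₀ * t + 2 * δ * |t|) := by rw [← Real.exp_add]; ring_nf
    _ ≤ _ := by
        rcases abs_cases t with ⟨ht, -⟩ | ⟨ht, -⟩ <;> rw [ht]
        · rw [← add_mul]
          exact le_add_of_nonneg_right (Real.exp_pos _).le
        · rw [mul_neg, ← sub_eq_add_neg, ← sub_mul]
          exact le_add_of_nonneg_left (Real.exp_pos _).le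

lemma differentiableAt_integral_cexp_smul {X E : Type*} [MeasurableSpace X]
    [NormedAddCommGroup E] [NormedSpace ℂ E] {μ : Measure X} {g : X → ℝ} {f : X → E} {z : ℂ}
    (hg : AEMeasurable g μ) (hf : AEStronglyMeasurable f μ)
    (hint : ∀ᶠ x : ℝ in 𝓝 z.re, Integrable (fun y => Real.exp (x * g y) * ‖f y‖) μ) :
    DifferentiableAt ℂ (fun w : ℂ => ∫ y, Complex.exp (w * g y) • f y ∂μ) z := by
  obtain ⟨ε, hε, hball⟩ := Metric.eventually_nhds_iff.1 hint
  set δ := ε / 3 with hδdef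
  have hδ : 0 < δ := by positivity
  have hplus := hball (y := z.re + 2 * δ)
    (by rw [Real.dist_eq, add_sub_cancel_left, abs_of_pos (by positivity)]; linarith)
  have hminus := hball (y := z.re - 2 * δ)
    (by rw [Real.dist_eq, sub_sub_cancel_left, abs_neg, abs_of_pos (by positivity)]; linarith)
  have hmeas : ∀ w : ℂ, AEStronglyMeasurable (fun y => Complex.exp (w * g y) • f y) μ := fun w =>
    (by fun_prop : AEMeasurable (fun y => Complex.exp (w * g y)) μ).aestronglyMeasurable.smul hf
  refine (hasDerivAt_integral_of_dominated_loc_of_deriv_le (Metric.ball_mem_nhds z hδ)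
    (F' := fun w y => ((g y : ℂ) * Complex.exp (w * g y)) • f y)
    (bound := fun y => δ⁻¹ * (Real.exp ((z.re + 2 * δ) * g y) * ‖f y‖ +
      Real.exp ((z.re - 2 * δ) * g y) * ‖f y‖))
    (.of_forall hmeas) ?_ ?_ ?_ ?_ ?_).2.differentiableAt
  · refine (integrable_norm_iff (hmeas z)).1 ((hball (dist_self z.re ▸ hε)).congr ?_)
    exact .of_forall fun y => by simp [norm_smul, Complex.norm_exp]
  · simp only [mul_smul]
    exact (Complex.measurable_ofReal.comp_aemeasurable hg).aestronglyMeasurable.smul (hmeas z)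
  · refine .of_forall fun y w hw => ?_
    have hre : |w.re - z.re| ≤ δ := by
      simpa using (Complex.abs_re_le_norm (w - z)).trans (mem_ball_iff_norm.1 hw).le
    have hnorm : ‖Complex.exp (w * g y)‖ = Real.exp (w.re * g y) := by simp [Complex.norm_exp]
    rw [norm_smul, norm_mul, hnorm, Complex.norm_real, Real.norm_eq_abs, ← add_mul, ← mul_assoc]
    exact mul_le_mul_of_nonneg_right (abs_mul_exp_mul_le hδ hre) (norm_nonneg _)
  · exact (hplus.add hminus).const_mul _
  · refine .of_forall fun y w _ => ?_
    simpa [mul_comm] using (((hasDerivAt_id w).mul_const (g y : ℂ)).cexp).smul_const (f y)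

/-- The kernel `∏ y_i ^ (s_i - 1)` of the multivariate Mellin transform. -/
noncomputable def mellinKernel {ι : Type*} [Fintype ι] (s : ι → ℂ) (y : ι → ℝ) : ℂ :=
  ∏ i, (y i : ℂ) ^ (s i - 1)

/-- The function `Λ(F, s)`: the multivariate Mellin transform divided by `∏ Γ(s_i)`. -/
noncomputable def normalizedMellin {ι : Type*} [Fintype ι] (F : (ι → ℝ) → ℂ) (s : ι → ℂ) : ℂ :=
  (∏ i, (Complex.Gamma (s i))⁻¹) * ∫ y, F y * mellinKernel s y ∂orthantMeasure ι

section Kernel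
variable {ι : Type*} [Fintype ι]

lemma measurable_mellinKernel (s : ι → ℂ) : Measurable (mellinKernel s) :=
  Finset.measurable_fun_prod _ fun i _ =>
    (Complex.measurable_ofReal.comp (measurable_pi_apply i)).pow_const _

lemma norm_mellinKernel (s : ι → ℂ) {y : ι → ℝ} (hy : ∀ i, 0 < y i) :
    ‖mellinKernel s y‖ = ∏ i, y i ^ ((s i).re - 1) := by
  simp [mellinKernel, Complex.norm_cpow_eq_rpow_re_of_pos (hy _)]

lemma mellinKernel_piecewise [DecidableEq ι] (J : Finset ι) (s : ι → ℂ) (z : ℂ) {y : ι → ℝ}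
    (hy : ∀ i, 0 < y i) :
    mellinKernel (J.piecewise (fun _ => z) s) y =
      Complex.exp (z * (∑ j ∈ J, Real.log (y j) : ℝ)) * mellinKernel (J.piecewise 0 s) y := by
  have hexp : Complex.exp (z * (∑ j ∈ J, Real.log (y j) : ℝ)) =
      ∏ j, if j ∈ J then (y j : ℂ) ^ z else 1 := by
    rw [Finset.prod_ite_mem, Finset.univ_inter, Complex.ofReal_sum, Finset.mul_sum,
      Complex.exp_sum]
    refine Finset.prod_congr rfl fun j _ => ?_
    rw [Complex.cpow_def_of_ne_zero (by exact_mod_cast (hy j).ne'), Complex.ofReal_log (hy j).le,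
      mul_comm]
  rw [hexp, mellinKernel, mellinKernel, ← Finset.prod_mul_distrib]
  refine Finset.prod_congr rfl fun j _ => ?_
  by_cases hj : j ∈ J
  · simp only [hj, Finset.piecewise_eq_of_mem, if_true, Pi.zero_apply]
    rw [← Complex.cpow_add _ _ (by exact_mod_cast (hy j).ne'), zero_sub, ← sub_eq_add_neg]
  · simp only [hj, not_false_eq_true, Finset.piecewise_eq_of_notMem, if_false, one_mul]

lemma mellinKernel_insertNth {n : ℕ} (i : Fin (n + 1)) (s : Fin (n + 1) → ℂ) (x : ℝ)
    (y : Fin n → ℝ) :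
    mellinKernel s (i.insertNth x y) = (x : ℂ) ^ (s i - 1) * mellinKernel (i.removeNth s) y := by
  simp [mellinKernel, Fin.prod_univ_succAbove _ i, Fin.removeNth]

end Kernel

section MellinIntegral
variable {n : ℕ}

/-- The tube on which the Mellin integral converges for a function that vanishes on the hyperplanes
`{y_i = 0}`, `i ∈ I`: each of these zeros moves the left edge of the strip for `s_i` from `0` to
`-1`. -/
def mellinStrip (I : Finset (Fin n)) : Set (Fin n → ℂ) :=
  {s | ∀ i, (if i ∈ I then -1 else 0) < (s i).re ∧ (s i).re < 1 / n}

section Strip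
variable {I J : Finset (Fin n)} {s : Fin n → ℂ}

lemma mem_mellinStrip_empty : s ∈ mellinStrip ∅ ↔ ∀ i, 0 < (s i).re ∧ (s i).re < 1 / n := by
  simp [mellinStrip]

lemma mellinStrip_mono (hIJ : I ⊆ J) : mellinStrip I ⊆ mellinStrip J := fun s hs i => by
  refine ⟨lt_of_le_of_lt ?_ (hs i).1, (hs i).2⟩
  split_ifs with hJ hI hI
  exacts [le_rfl, by norm_num, absurd (hIJ hI) hJ, le_rfl]

lemma isOpen_mellinStrip (I : Finset (Fin n)) : IsOpen (mellinStrip I) := by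
  simp only [mellinStrip, ofPred_forall]
  exact isOpen_iInter_of_finite fun i =>
    isOpen_Ioo.preimage (Complex.continuous_re.comp (continuous_apply i))

lemma continuous_piecewise_ofReal {ι : Type*} [DecidableEq ι] (J : Finset ι) (s : ι → ℂ) :
    Continuous fun x : ℝ => J.piecewise (fun _ => (x : ℂ)) s :=
  continuous_pi fun i => by
    by_cases hi : i ∈ J
    · simpa [hi] using Complex.continuous_ofReal
    · simpa [hi] using continuous_const

lemma eventually_piecewise_re_mem_mellinStrip {z : ℂ}
    (hs : J.piecewise (fun _ => z) s ∈ mellinStrip I) :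
    ∀ᶠ x : ℝ in 𝓝 z.re, J.piecewise (fun _ => (x : ℂ)) s ∈ mellinStrip I := by
  refine (continuous_piecewise_ofReal J s).continuousAt.eventually_mem
    ((isOpen_mellinStrip I).mem_nhds fun i => ?_)
  have hi := hs i
  by_cases hJ : i ∈ J
  · simpa [hJ] using hi
  · simpa [hJ] using hi

end Strip

lemma sum_lt_one_of_lt_one_div {σ : Fin n → ℝ} (hσ : ∀ i, σ i < 1 / n) : ∑ i, σ i < 1 := by
  rcases n.eq_zero_or_pos with rfl | hn
  · simp
  · have : NeZero n := ⟨hn.ne'⟩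
    calc ∑ i, σ i < ∑ _i : Fin n, 1 / (n : ℝ) :=
          Finset.sum_lt_sum_of_nonempty Finset.univ_nonempty fun i _ => hσ i
      _ = 1 := by
          rw [Finset.sum_const, Finset.card_univ, Fintype.card_fin, nsmul_eq_mul,
            mul_one_div_cancel (by positivity)]

lemma min_one_mul_rpow_le {y a σ : ℝ} (hy : 0 < y) (ha : a ≤ σ) (ha' : σ ≤ a + 1) :
    min 1 y * y ^ (a - 1) ≤ y ^ (σ - 1) := by
  rcases le_total 1 y with h | h
  · rw [min_eq_left h, one_mul]
    exact Real.rpow_le_rpow_of_exponent_le h (by linarith)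
  · rw [min_eq_right h, Real.rpow_sub_one hy.ne', mul_div_cancel₀ _ hy.ne']
    exact Real.rpow_le_rpow_of_exponent_ge hy h (by linarith)

section Convergence
variable {F : (Fin n → ℝ) → ℂ} {I : Finset (Fin n)} {s : Fin n → ℂ}

lemma exists_exponents_of_mem_mellinStrip (hs : s ∈ mellinStrip I) :
    ∃ σ : Fin n → ℝ, (∀ i, 0 < σ i ∧ σ i < 1 / n) ∧
      ∀ i, if i ∈ I then (s i).re ≤ σ i ∧ σ i ≤ (s i).re + 1 else σ i = (s i).re := by
  have h : ∀ i, ∃ σ : ℝ, (0 < σ ∧ σ < 1 / n) ∧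
      if i ∈ I then (s i).re ≤ σ ∧ σ ≤ (s i).re + 1 else σ = (s i).re := fun i => by
    obtain ⟨hlo, hup⟩ := hs i
    split_ifs at hlo ⊢ with hi
    · have hn : (0 : ℝ) < 1 / n := by
        have := i.pos
        positivity
      obtain ⟨σ, hl, hr⟩ := exists_between
        (max_lt (lt_min (by linarith) hup) (lt_min (by linarith) hn) :
          max (s i).re 0 < min ((s i).re + 1) (1 / n))
      rw [max_lt_iff] at hl
      rw [lt_min_iff] at hr
      exact ⟨σ, ⟨hl.2, hr.2⟩, hl.1.le, hr.1.le⟩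
    · exact ⟨_, ⟨hlo, hup⟩, rfl⟩
  choose σ hσ using h
  exact ⟨σ, fun i => (hσ i).1, fun i => (hσ i).2⟩

namespace DecayingSmooth

lemma integrable_mul_mellinKernel (hF : DecayingSmooth F)
    (hI : ∀ i ∈ I, VanishesOnHyperplane i F) (hs : s ∈ mellinStrip I) :
    Integrable (fun y => F y * mellinKernel s y) (orthantMeasure (Fin n)) := by
  obtain ⟨W, hW, hFW⟩ := hF.exists_norm_le_mul_prod_min hI
  obtain ⟨σ, hσ, hσs⟩ := exists_exponents_of_mem_mellinStrip hs
  refine (hW.integrable_mul_prod_rpow (fun i => (hσ i).1)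
    (sum_lt_one_of_lt_one_div fun i => (hσ i).2)).mono'
    (hF.contDiff.continuous.measurable.mul (measurable_mellinKernel s)).aestronglyMeasurable ?_
  filter_upwards [ae_orthantMeasure_pos (Fin n)] with y hy
  rw [norm_mul, norm_mellinKernel s hy]
  calc ‖F y‖ * ∏ i, y i ^ ((s i).re - 1)
      ≤ (W y * ∏ i ∈ I, min 1 (y i)) * ∏ i, y i ^ ((s i).re - 1) := by
        gcongr
        · exact Finset.prod_nonneg fun i _ => Real.rpow_nonneg (hy i).le _
        · exact hFW y fun i => (hy i).le
    _ = W y * ∏ i, (if i ∈ I then min 1 (y i) else 1) * y i ^ ((s i).re - 1) := by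
        rw [Finset.prod_mul_distrib, Finset.prod_ite_mem, Finset.univ_inter, mul_assoc]
    _ ≤ W y * ∏ i, y i ^ (σ i - 1) := by
        refine mul_le_mul_of_nonneg_left (Finset.prod_le_prod (fun i _ => ?_) fun i _ => ?_)
          (hW.nonneg y)
        · have := hy i
          positivity
        · have hi := hσs i
          split_ifs at hi ⊢
          · exact min_one_mul_rpow_le (hy i) hi.1 hi.2
          · rw [hi, one_mul]

lemma differentiableAt_integral_piecewise (hF : DecayingSmooth F)
    (hI : ∀ i ∈ I, VanishesOnHyperplane i F) (J : Finset (Fin n)) {z : ℂ}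
    (hs : J.piecewise (fun _ => z) s ∈ mellinStrip I) :
    DifferentiableAt ℂ (fun w => ∫ y, F y * mellinKernel (J.piecewise (fun _ => w) s) y
      ∂orthantMeasure (Fin n)) z := by
  have hkernel : ∀ w : ℂ, (fun y => F y * mellinKernel (J.piecewise (fun _ => w) s) y)
      =ᵐ[orthantMeasure (Fin n)] fun y => Complex.exp (w * (∑ j ∈ J, Real.log (y j) : ℝ)) •
        (F y * mellinKernel (J.piecewise 0 s) y) := fun w => by
    filter_upwards [ae_orthantMeasure_pos (Fin n)] with y hy
    rw [mellinKernel_piecewise J s w hy, smul_eq_mul, mul_left_comm]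
  simp_rw [fun w => integral_congr_ae (hkernel w)]
  refine differentiableAt_integral_cexp_smul
    (Finset.measurable_fun_sum J fun j _ =>
      Real.measurable_log.comp (measurable_pi_apply j)).aemeasurable
    (hF.contDiff.continuous.measurable.mul (measurable_mellinKernel _)).aestronglyMeasurable ?_
  filter_upwards [eventually_piecewise_re_mem_mellinStrip hs] with x hx
  refine (((hF.integrable_mul_mellinKernel hI hx).congr (hkernel x)).norm).congr ?_
  exact .of_forall fun y => by simp [Complex.norm_exp]

end DecayingSmooth
end Convergence

end MellinIntegral

section Fubini
variable {n : ℕ}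

lemma measurePreserving_dite_mem {ι : Type*} [Fintype ι] [DecidableEq ι] (I : Finset ι) :
    MeasurePreserving
      (fun (z : ({i // i ∈ I} → ℝ) × ({i // i ∉ I} → ℝ)) (i : ι) =>
        if h : i ∈ I then z.1 ⟨i, h⟩ else z.2 ⟨i, h⟩)
      ((orthantMeasure {i // i ∈ I}).prod (orthantMeasure {i // i ∉ I})) (orthantMeasure ι) := by
  unfold orthantMeasure
  convert (measurePreserving_piEquivPiSubtypeProd
    (fun _ : ι => (volume : Measure ℝ).restrict (Ioi 0)) (· ∈ I)).symm
  rfl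

lemma measurableEmbedding_dite_mem {ι : Type*} [DecidableEq ι] (I : Finset ι) :
    MeasurableEmbedding fun (z : ({i // i ∈ I} → ℝ) × ({i // i ∉ I} → ℝ)) (i : ι) =>
      if h : i ∈ I then z.1 ⟨i, h⟩ else z.2 ⟨i, h⟩ :=
  (MeasurableEquiv.piEquivPiSubtypeProd (fun _ : ι => ℝ) (· ∈ I)).symm.measurableEmbedding

lemma integral_Ioi_exp_neg_mul_cpow {z : ℂ} (hz : 0 < z.re) :
    ∫ x in Ioi (0 : ℝ), (Real.exp (-x) : ℂ) * (x : ℂ) ^ (z - 1) = Complex.Gamma z := by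
  rw [Complex.Gamma_eq_integral hz, Complex.GammaIntegral]

/-- The function `y_I ↦ F(y_I, 0)` on the coordinate face where the coordinates outside `I`
vanish. -/
def faceRestriction (I : Finset (Fin n)) (F : (Fin n → ℝ) → ℂ) : ({i // i ∈ I} → ℝ) → ℂ :=
  fun t => F fun i => if h : i ∈ I then t ⟨i, h⟩ else 0

lemma expTrace_compl_mul_mellinKernel_eq (I : Finset (Fin n)) (F : (Fin n → ℝ) → ℂ)
    (s : Fin n → ℂ) (t : {i // i ∈ I} → ℝ) (r : {i // i ∉ I} → ℝ) :
    expTrace Iᶜ F (fun i => if h : i ∈ I then t ⟨i, h⟩ else r ⟨i, h⟩) *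
        mellinKernel s (fun i => if h : i ∈ I then t ⟨i, h⟩ else r ⟨i, h⟩) =
      (faceRestriction I F t * mellinKernel (fun i : {i // i ∈ I} => s i) t) *
        ∏ j : {i // i ∉ I}, (Real.exp (-r j) : ℂ) * (r j : ℂ) ^ (s j - 1) := by
  have hface : (Iᶜ.piecewise 0 fun i => if h : i ∈ I then t ⟨i, h⟩ else r ⟨i, h⟩) =
      fun i => if h : i ∈ I then t ⟨i, h⟩ else 0 := by
    ext i
    by_cases hi : i ∈ I <;> simp [hi]
  have hcompl : ∀ f : Fin n → ℂ, ∏ i ∈ Iᶜ, f i = ∏ i : {i // i ∉ I}, f i := fun f =>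
    Finset.prod_subtype Iᶜ (by simp) f
  have hkernel : mellinKernel s (fun i => if h : i ∈ I then t ⟨i, h⟩ else r ⟨i, h⟩) =
      mellinKernel (fun i : {i // i ∈ I} => s i) t *
        ∏ j : {i // i ∉ I}, (r j : ℂ) ^ (s j - 1) := by
    rw [mellinKernel, mellinKernel, ← Finset.prod_mul_prod_compl I, hcompl, ← Finset.prod_coe_sort]
    congr 1 <;> exact Finset.prod_congr rfl fun i _ => by simp [i.2]
  have hexp : ∏ j : {i // i ∉ I},
        (Real.exp (-if h : (j : Fin n) ∈ I then t ⟨j, h⟩ else r ⟨j, h⟩) : ℂ) =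
      ∏ j, (Real.exp (-r j) : ℂ) := Finset.prod_congr rfl fun i _ => by simp [i.2]
  rw [expTrace, hface, faceRestriction, hcompl, hexp, hkernel, Finset.prod_mul_distrib]
  ring

lemma integral_expTrace_compl_mul_mellinKernel (I : Finset (Fin n)) (F : (Fin n → ℝ) → ℂ)
    {s : Fin n → ℂ} (hs : ∀ i ∉ I, 0 < (s i).re) :
    ∫ y, expTrace Iᶜ F y * mellinKernel s y ∂orthantMeasure (Fin n) =
      (∫ t, faceRestriction I F t * mellinKernel (fun i : {i // i ∈ I} => s i) t
        ∂orthantMeasure {i // i ∈ I}) *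
        ∏ i ∈ Iᶜ, Complex.Gamma (s i) := by
  rw [← (measurePreserving_dite_mem I).integral_comp (measurableEmbedding_dite_mem I)]
  simp_rw [expTrace_compl_mul_mellinKernel_eq]
  rw [integral_prod_mul (fun t : {i // i ∈ I} → ℝ => faceRestriction I F t *
    mellinKernel (fun i : {i // i ∈ I} => s i) t) fun r : {i // i ∉ I} → ℝ =>
      ∏ j, (Real.exp (-r j) : ℂ) * (r j : ℂ) ^ (s j - 1), orthantMeasure, orthantMeasure,
    integral_fintype_prod_eq_prod fun (j : {i // i ∉ I}) (x : ℝ) =>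
      (Real.exp (-x) : ℂ) * (x : ℂ) ^ (s j - 1), Finset.prod_subtype (p := (· ∉ I)) Iᶜ (by simp)]
  exact congrArg _ (Finset.prod_congr rfl fun j _ => integral_Ioi_exp_neg_mul_cpow (hs j j.2))

lemma normalizedMellin_expTrace_compl (I : Finset (Fin n)) (F : (Fin n → ℝ) → ℂ)
    {s : Fin n → ℂ} (hs : ∀ i ∉ I, 0 < (s i).re) :
    normalizedMellin (expTrace Iᶜ F) s =
      normalizedMellin (faceRestriction I F) (fun i : {i // i ∈ I} => s i) := by
  have hGamma : (∏ i ∈ Iᶜ, (Complex.Gamma (s i))⁻¹) * ∏ i ∈ Iᶜ, Complex.Gamma (s i) = 1 := by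
    rw [← Finset.prod_mul_distrib]
    exact Finset.prod_eq_one fun i hi =>
      inv_mul_cancel₀ (Complex.Gamma_ne_zero_of_re_pos (hs i (Finset.mem_compl.1 hi)))
  rw [normalizedMellin, normalizedMellin, integral_expTrace_compl_mul_mellinKernel I F hs,
    ← Finset.prod_mul_prod_compl I, Finset.prod_coe_sort I fun i => (Complex.Gamma (s i))⁻¹]
  linear_combination (∏ i ∈ I, (Complex.Gamma (s i))⁻¹) * (∫ t, faceRestriction I F t *
    mellinKernel (fun i : {i // i ∈ I} => s i) t ∂orthantMeasure {i // i ∈ I}) * hGamma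

lemma normalizedMellin_expTrace_singleton_congr (i : Fin n) (F : (Fin n → ℝ) → ℂ)
    {s : Fin n → ℂ} {z w : ℂ} (hz : 0 < z.re) (hw : 0 < w.re) :
    normalizedMellin (expTrace {i} F) (Function.update s i z) =
      normalizedMellin (expTrace {i} F) (Function.update s i w) := by
  rw [← compl_compl ({i} : Finset (Fin n)), normalizedMellin_expTrace_compl,
    normalizedMellin_expTrace_compl]
  · congr! 2 with j
    have hj : (j : Fin n) ≠ i := fun h => Finset.mem_compl.1 j.2 (Finset.mem_singleton.2 h)
    rw [Function.update_of_ne hj, Function.update_of_ne hj]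
  all_goals
    intro j hj
    obtain rfl : j = i := by simpa using hj
    simpa

end Fubini

section IntegrationByParts

lemma tendsto_mul_cpow_nhdsGT_zero {b : ℝ → ℂ} {C : ℝ} {z : ℂ} (hz : -1 < z.re)
    (hb : ∀ x > 0, ‖b x‖ ≤ C * min 1 x) :
    Tendsto (fun x : ℝ => b x * (x : ℂ) ^ z) (𝓝[>] 0) (𝓝 0) := by
  have hlim : Tendsto (fun x : ℝ => C * x ^ (z.re + 1)) (𝓝[>] 0) (𝓝 0) := by
    have h := ((Real.continuous_rpow_const (q := z.re + 1) (by linarith)).tendsto 0).const_mul C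
    rw [Real.zero_rpow (by linarith), mul_zero] at h
    exact h.mono_left nhdsWithin_le_nhds
  refine squeeze_zero_norm' ?_ hlim
  filter_upwards [self_mem_nhdsWithin] with x (hx : 0 < x)
  have hC : 0 ≤ C := nonneg_of_mul_nonneg_left ((norm_nonneg _).trans (hb x hx)) (by positivity)
  rw [norm_mul, Complex.norm_cpow_eq_rpow_re_of_pos hx, Real.rpow_add_one hx.ne',
    mul_comm (x ^ z.re), ← mul_assoc]
  gcongr
  exact (hb x hx).trans (by gcongr; exact min_le_right 1 x)

lemma tendsto_mul_cpow_atTop {b : ℝ → ℂ} {C : ℝ} {z : ℂ} (hz : z.re < 0)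
    (hb : ∀ x > 0, ‖b x‖ ≤ C) :
    Tendsto (fun x : ℝ => b x * (x : ℂ) ^ z) atTop (𝓝 0) := by
  have hlim : Tendsto (fun x : ℝ => C * x ^ z.re) atTop (𝓝 0) := by
    simpa using (tendsto_rpow_neg_atTop (y := -z.re) (by linarith)).const_mul C
  refine squeeze_zero_norm' ?_ hlim
  filter_upwards [Ioi_mem_atTop 0] with x (hx : 0 < x)
  rw [norm_mul, Complex.norm_cpow_eq_rpow_re_of_pos hx]
  exact mul_le_mul_of_nonneg_right (hb x hx) (Real.rpow_nonneg hx.le _)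

lemma integral_Ioi_mul_cpow_sub_one {b b' : ℝ → ℂ} {C : ℝ} {z : ℂ} (hz : -1 < z.re)
    (hz0 : z.re < 0) (hderiv : ∀ x, HasDerivAt b (b' x) x) (hb : ∀ x > 0, ‖b x‖ ≤ C * min 1 x)
    (hint : IntegrableOn (fun x : ℝ => b x * (x : ℂ) ^ (z - 1)) (Ioi 0))
    (hint' : IntegrableOn (fun x : ℝ => b' x * (x : ℂ) ^ z) (Ioi 0)) :
    ∫ x in Ioi (0 : ℝ), b x * (x : ℂ) ^ (z - 1) =
      -(z⁻¹ * ∫ x in Ioi (0 : ℝ), b' x * (x : ℂ) ^ z) := by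
  have hzne : z ≠ 0 := fun h => by simp [h] at hz0
  have hbC : ∀ x > 0, ‖b x‖ ≤ C := fun x hx => by
    have hC : 0 ≤ C := nonneg_of_mul_nonneg_left ((norm_nonneg _).trans (hb x hx)) (by positivity)
    exact (hb x hx).trans (mul_le_of_le_one_right hC (min_le_left 1 x))
  have hpow : ∀ x ∈ Ioi (0 : ℝ),
      HasDerivAt (fun x : ℝ => (x : ℂ) ^ z * z⁻¹) ((x : ℂ) ^ (z - 1)) x := fun x hx =>
    ((hasDerivAt_ofReal_cpow_const (ne_of_gt hx) hzne).mul_const z⁻¹).congr_deriv (by field_simp)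
  have hparts := integral_Ioi_mul_deriv_eq_deriv_mul (fun x _ => hderiv x) hpow hint
    ((hint'.mul_const z⁻¹).congr (.of_forall fun x => mul_assoc _ _ _))
    (a' := 0) (b' := 0)
    (by simpa [Pi.mul_def, mul_assoc] using (tendsto_mul_cpow_nhdsGT_zero hz hb).mul_const z⁻¹)
    (by simpa [Pi.mul_def, mul_assoc] using (tendsto_mul_cpow_atTop hz0 hbC).mul_const z⁻¹)
  rw [hparts, sub_zero, zero_sub]
  simp_rw [← mul_assoc, integral_mul_const, mul_comm z⁻¹]

variable {n : ℕ}

lemma sub_single_mem_mellinStrip {s : Fin n → ℂ} (hs : s ∈ mellinStrip ∅) (i : Fin n) :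
    s - Pi.single i 1 ∈ mellinStrip {i} := fun j => by
  have hj := mem_mellinStrip_empty.1 hs j
  obtain rfl | hji := eq_or_ne j i
  · simp only [Finset.mem_singleton, if_true, Pi.sub_apply, Pi.single_eq_same, Complex.sub_re,
      Complex.one_re]
    constructor <;> linarith [hj.1, hj.2]
  · simpa [hji] using hj

lemma DecayingSmooth.exists_norm_le_mul_min {F : (Fin n → ℝ) → ℂ} (hF : DecayingSmooth F)
    {i : Fin n} (hi : VanishesOnHyperplane i F) :
    ∃ C, ∀ y ∈ Quadrant n, ‖F y‖ ≤ C * min 1 (y i) := by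
  obtain ⟨W, hW, hFW⟩ := hF.exists_norm_le_mul_prod_min (I := {i}) (by simpa using hi)
  obtain ⟨C, hC⟩ := hW.exists_le
  refine ⟨C, fun y hy => (hFW y hy).trans ?_⟩
  rw [Finset.prod_singleton]
  exact mul_le_mul_of_nonneg_right (hC y) (le_min zero_le_one (hy i))

lemma integral_orthant_insertNth (i : Fin (n + 1)) {f : (Fin (n + 1) → ℝ) → ℂ}
    (hf : Integrable f (orthantMeasure (Fin (n + 1)))) :
    ∫ y, f y ∂orthantMeasure (Fin (n + 1)) =
      ∫ r, (∫ x in Ioi (0 : ℝ), f (i.insertNth x r)) ∂orthantMeasure (Fin n) := by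
  have hprod := (measurePreserving_insertNth i).integrable_comp_emb
    (measurableEmbedding_insertNth i) |>.2 hf
  rw [← (measurePreserving_insertNth i).integral_comp (measurableEmbedding_insertNth i)]
  exact integral_prod_symm _ hprod

lemma ae_integrableOn_insertNth (i : Fin (n + 1)) {f : (Fin (n + 1) → ℝ) → ℂ}
    (hf : Integrable f (orthantMeasure (Fin (n + 1)))) :
    ∀ᵐ r ∂orthantMeasure (Fin n), IntegrableOn (fun x : ℝ => f (i.insertNth x r)) (Ioi 0) :=
  ((measurePreserving_insertNth i).integrable_comp_emb
    (measurableEmbedding_insertNth i) |>.2 hf).prod_left_ae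

lemma mellinKernel_sub_single_insertNth (i : Fin (n + 1)) (s : Fin (n + 1) → ℂ) (x : ℝ)
    (r : Fin n → ℝ) :
    mellinKernel (s - Pi.single i 1) (i.insertNth x r) =
      mellinKernel (i.removeNth s) r * (x : ℂ) ^ (s i - 1 - 1) := by
  have hrest : i.removeNth (s - Pi.single i 1) = i.removeNth s := by
    ext j
    simp [Fin.removeNth]
  rw [mellinKernel_insertNth, hrest, Pi.sub_apply, Pi.single_eq_same, mul_comm]

namespace DecayingSmooth

lemma integral_insertNth_mul_mellinKernel_sub_single {F : (Fin (n + 1) → ℝ) → ℂ}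
    (hF : DecayingSmooth F) {i : Fin (n + 1)} (hi : VanishesOnHyperplane i F)
    {s : Fin (n + 1) → ℂ} (hs : 0 < (s i).re) (hs1 : (s i).re < 1) {r : Fin n → ℝ}
    (hr : ∀ j, 0 < r j)
    (hint : IntegrableOn (fun x : ℝ => F (i.insertNth x r) *
      mellinKernel (s - Pi.single i 1) (i.insertNth x r)) (Ioi 0))
    (hint' : IntegrableOn (fun x : ℝ => _root_.pderivNeg (n + 1) i F (i.insertNth x r) *
      mellinKernel s (i.insertNth x r)) (Ioi 0)) :
    ∫ x in Ioi (0 : ℝ), F (i.insertNth x r) *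
        mellinKernel (s - Pi.single i 1) (i.insertNth x r) =
      (s i - 1)⁻¹ * ∫ x in Ioi (0 : ℝ), _root_.pderivNeg (n + 1) i F (i.insertNth x r) *
        mellinKernel s (i.insertNth x r) := by
  obtain ⟨C, hC⟩ := hF.exists_norm_le_mul_min hi
  simp only [mellinKernel_sub_single_insertNth, mellinKernel_insertNth i s, ← mul_assoc,
    mul_right_comm _ _ (mellinKernel (i.removeNth s) r)] at hint hint' ⊢
  set R := mellinKernel (i.removeNth s) r
  have hderiv : ∀ x : ℝ, HasDerivAt (fun x : ℝ => F (i.insertNth x r) * R)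
      (-_root_.pderivNeg (n + 1) i F (i.insertNth x r) * R) x := fun x => by
    simpa only [Fin.update_insertNth] using
      (hasDerivAt_comp_update hF.differentiable i (i.insertNth 0 r) x).mul_const R
  have hbound : ∀ x > 0, ‖F (i.insertNth x r) * R‖ ≤ C * ‖R‖ * min 1 x := fun x hx => by
    rw [norm_mul, mul_right_comm]
    refine mul_le_mul_of_nonneg_right ?_ (norm_nonneg R)
    simpa using hC (i.insertNth x r) ((i.forall_iff_succAbove).2
      ⟨by simpa using hx.le, fun j => by simpa using (hr j).le⟩)
  rw [integral_Ioi_mul_cpow_sub_one (by simpa using hs) (by simpa using hs1) hderiv hbound hint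
    (by simpa only [neg_mul, Pi.neg_def] using hint'.neg)]
  simp only [neg_mul, integral_neg, mul_neg, neg_neg]

lemma integral_mul_mellinKernel_sub_single {F : (Fin n → ℝ) → ℂ}
    (hF : DecayingSmooth F) {i : Fin n} (hi : VanishesOnHyperplane i F) {s : Fin n → ℂ}
    (hs : s ∈ mellinStrip ∅) :
    ∫ y, F y * mellinKernel (s - Pi.single i 1) y ∂orthantMeasure (Fin n) =
      (s i - 1)⁻¹ * ∫ y, _root_.pderivNeg n i F y * mellinKernel s y ∂orthantMeasure (Fin n) := by
  cases n with
  | zero => exact i.elim0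
  | succ n =>
    have hint := hF.integrable_mul_mellinKernel (I := {i}) (by simpa using hi)
      (sub_single_mem_mellinStrip hs i)
    have hint' := (hF.pderivNeg i).integrable_mul_mellinKernel (I := ∅) (by simp) hs
    have hsi := mem_mellinStrip_empty.1 hs i
    have hsi1 : (s i).re < 1 := hsi.2.trans_le (by
      rw [one_div]
      exact inv_le_one_of_one_le₀ (by simp))
    rw [integral_orthant_insertNth i hint, integral_orthant_insertNth i hint',
      ← integral_const_mul]
    refine integral_congr_ae ?_
    filter_upwards [ae_integrableOn_insertNth i hint, ae_integrableOn_insertNth i hint',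
      ae_orthantMeasure_pos (Fin n)] with r hr hr' hpos
    exact hF.integral_insertNth_mul_mellinKernel_sub_single hi hsi.1 hsi1 hpos hr hr'

end DecayingSmooth
end IntegrationByParts

section Continuation
variable {n : ℕ}

/-- The tube `{Re s_i < 1/n for all i}` to which the normalized Mellin transform extends. -/
def mellinDomain (n : ℕ) : Set (Fin n → ℂ) := {s | ∀ i, (s i).re < 1 / n}

lemma mellinStrip_subset_mellinDomain (I : Finset (Fin n)) : mellinStrip I ⊆ mellinDomain n :=
  fun _ hs i => (hs i).2

lemma piecewise_zero_mem_mellinDomain {s : Fin n → ℂ} (hs : s ∈ mellinDomain n)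
    (J : Finset (Fin n)) : J.piecewise 0 s ∈ mellinDomain n := fun i => by
  by_cases hi : i ∈ J
  · have := i.pos
    simpa [hi]
  · simpa [hi] using hs i

lemma zero_mem_mellinDomain : 0 ∈ mellinDomain n := fun i => by
  have := i.pos
  simpa

lemma isOpen_mellinDomain : IsOpen (mellinDomain n) := by
  simp only [mellinDomain, ofPred_forall]
  exact isOpen_iInter_of_finite fun i =>
    isOpen_lt (Complex.continuous_re.comp (continuous_apply i)) continuous_const

lemma isPreconnected_mellinDomain : IsPreconnected (mellinDomain n) := by
  simp only [mellinDomain, ofPred_forall]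
  refine (convex_iInter fun i => ?_ : Convex ℝ _).isPreconnected
  exact convex_halfSpace_lt (f := fun s : Fin n → ℂ => (s i).re)
    ⟨fun _ _ => by simp, fun _ _ => by simp⟩ _

lemma mellinStrip_nonempty (I : Finset (Fin n)) : (mellinStrip I).Nonempty := by
  refine ⟨fun _ => ((1 / (2 * n) : ℝ) : ℂ), fun i => ?_⟩
  have := i.pos
  rw [Complex.ofReal_re]
  constructor
  · exact lt_of_le_of_lt (by split_ifs <;> norm_num) (by positivity : (0 : ℝ) < 1 / (2 * n))
  · gcongr
    linarith [show (0 : ℝ) < n by positivity]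

lemma update_mem_mellinStrip {I : Finset (Fin n)} {s : Fin n → ℂ} {i : Fin n} {z : ℂ}
    (hs : s ∈ mellinStrip I) (hz : (if i ∈ I then -1 else 0) < z.re) (hz' : z.re < 1 / n) :
    Function.update s i z ∈ mellinStrip I := fun j => by
  obtain rfl | hj := eq_or_ne j i
  · simpa using And.intro hz (by simpa using hz')
  · simpa [hj] using hs j

lemma sub_single_one_eq_update (s : Fin n → ℂ) (i : Fin n) :
    s - Pi.single i 1 = Function.update s i (s i - 1) := by
  ext j
  obtain rfl | hj := eq_or_ne j i <;> simp [*]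

lemma prod_inv_Gamma_sub_single {s : Fin n → ℂ} {i : Fin n} (hs : s i ≠ 1) :
    (∏ j, (Complex.Gamma ((s - Pi.single i 1 : Fin n → ℂ) j))⁻¹) * (s i - 1)⁻¹ =
      ∏ j, (Complex.Gamma (s j))⁻¹ := by
  have hGamma : Complex.Gamma (s i) = (s i - 1) * Complex.Gamma (s i - 1) := by
    rw [← Complex.Gamma_add_one _ (sub_ne_zero.2 hs), sub_add_cancel]
  rw [← Finset.mul_prod_erase _ _ (Finset.mem_univ i),
    ← Finset.mul_prod_erase _ (fun j => (Complex.Gamma (s j))⁻¹) (Finset.mem_univ i), hGamma,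
    Finset.prod_congr rfl fun j hj => by
      rw [Pi.sub_apply, Pi.single_eq_of_ne (Finset.ne_of_mem_erase hj), sub_zero],
    Pi.sub_apply, Pi.single_eq_same, mul_inv]
  ring

section NormalizedMellin
variable {F G : (Fin n → ℝ) → ℂ} {s : Fin n → ℂ} {i : Fin n}

lemma normalizedMellin_sub (hF : DecayingSmooth F) (hG : DecayingSmooth G)
    (hs : s ∈ mellinStrip ∅) :
    normalizedMellin (F - G) s = normalizedMellin F s - normalizedMellin G s := by
  simp only [normalizedMellin, Pi.sub_apply, sub_mul]
  rw [integral_sub (hF.integrable_mul_mellinKernel (by simp) hs)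
    (hG.integrable_mul_mellinKernel (by simp) hs), mul_sub]

lemma normalizedMellin_eq_zero_of_apply_eq_zero {ι : Type*} [Fintype ι] (F : (ι → ℝ) → ℂ)
    {s : ι → ℂ} {i : ι} (hs : s i = 0) : normalizedMellin F s = 0 := by
  rw [normalizedMellin, Finset.prod_eq_zero (Finset.mem_univ i) (by simp [hs]), zero_mul]

lemma DecayingSmooth.normalizedMellin_sub_single (hF : DecayingSmooth F)
    (hi : VanishesOnHyperplane i F) (hs : s ∈ mellinStrip ∅) :
    normalizedMellin F (s - Pi.single i 1) = normalizedMellin (_root_.pderivNeg n i F) s := by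
  have hs1 : s i ≠ 1 := fun h => by
    have hlt := (mem_mellinStrip_empty.1 hs i).2
    have hle : 1 / (n : ℝ) ≤ 1 := by
      rw [one_div]
      exact inv_le_one_of_one_le₀ (by exact_mod_cast i.pos)
    rw [h, Complex.one_re] at hlt
    exact hlt.not_ge hle
  rw [normalizedMellin, normalizedMellin, hF.integral_mul_mellinKernel_sub_single hi hs,
    ← mul_assoc, prod_inv_Gamma_sub_single hs1]

lemma DecayingSmooth.differentiableAt_normalizedMellin_update (hF : DecayingSmooth F)
    (hi : VanishesOnHyperplane i F) {z : ℂ} (hs : Function.update s i z ∈ mellinStrip {i}) :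
    DifferentiableAt ℂ (fun w => normalizedMellin F (Function.update s i w)) z := by
  refine DifferentiableAt.mul (.fun_finsetProd fun j _ => ?_) ?_
  · obtain rfl | hj := eq_or_ne j i
    · simpa using Complex.differentiable_one_div_Gamma.differentiableAt
    · simp [hj]
  · simpa only [Finset.piecewise_singleton] using hF.differentiableAt_integral_piecewise
      (I := {i}) (by simpa using hi) {i} (by rwa [Finset.piecewise_singleton])

end NormalizedMellin

/-- `Ψ` is an analytic continuation of the normalized Mellin transform of `F` from the tube
`{0 < Re s_i < 1/n}`, where the integral converges, to `{Re s_i < 1/n}`. -/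
structure IsMellinContinuation (F : (Fin n → ℝ) → ℂ) (Ψ : (Fin n → ℂ) → ℂ) : Prop where
  analyticOnNhd : AnalyticOnNhd ℂ Ψ (mellinDomain n)
  eqOn : EqOn Ψ (normalizedMellin F) (mellinStrip ∅)

namespace IsMellinContinuation
variable {F : (Fin n → ℝ) → ℂ} {Ψ Ψ' : (Fin n → ℂ) → ℂ}

lemma unique (h : IsMellinContinuation F Ψ) (h' : IsMellinContinuation F Ψ') :
    EqOn Ψ Ψ' (mellinDomain n) := by
  obtain ⟨s, hs⟩ := mellinStrip_nonempty (∅ : Finset (Fin n))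
  exact h.analyticOnNhd.eqOn_of_preconnected_of_eventuallyEq h'.analyticOnNhd
    isPreconnected_mellinDomain (mellinStrip_subset_mellinDomain ∅ hs)
    ((h.eqOn.trans h'.eqOn.symm).eventuallyEq_of_mem ((isOpen_mellinStrip ∅).mem_nhds hs))

lemma zero : IsMellinContinuation (0 : (Fin n → ℝ) → ℂ) 0 where
  analyticOnNhd := analyticOnNhd_const
  eqOn s _ := by simp [normalizedMellin]

lemma apply_update (h : IsMellinContinuation F Ψ) (hF : DecayingSmooth F) {i : Fin n}
    {s : Fin n → ℂ} (hs : s ∈ mellinStrip ∅) {z : ℂ} (hz : -1 < z.re) (hz' : z.re < 1 / n) :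
    Ψ (Function.update s i z) = normalizedMellin (_root_.expTrace {i} F) s +
      normalizedMellin (F - _root_.expTrace {i} F) (Function.update s i z) := by
  set V : Set ℂ := {w | -1 < w.re} ∩ {w | w.re < 1 / n}
  have hVopen : IsOpen V := (isOpen_lt continuous_const Complex.continuous_re).inter
    (isOpen_lt Complex.continuous_re continuous_const)
  have hVconn : IsPreconnected V :=
    ((convex_halfSpace_re_gt _).inter (convex_halfSpace_re_lt _)).isPreconnected
  have hmem : ∀ w ∈ V, Function.update s i w ∈ mellinStrip {i} := fun w hw =>
    update_mem_mellinStrip (mellinStrip_mono (Finset.empty_subset _) hs) (by simpa using hw.1) hw.2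
  have hleft : AnalyticOnNhd ℂ (fun w => Ψ (Function.update s i w)) V :=
    DifferentiableOn.analyticOnNhd (fun w hw => ((h.analyticOnNhd _
      (mellinStrip_subset_mellinDomain _ (hmem w hw))).differentiableAt.comp w
        (hasDerivAt_update s i w).differentiableAt).differentiableWithinAt) hVopen
  have hright : AnalyticOnNhd ℂ (fun w => normalizedMellin (_root_.expTrace {i} F) s +
      normalizedMellin (F - _root_.expTrace {i} F) (Function.update s i w)) V :=
    DifferentiableOn.analyticOnNhd (fun w hw => (((hF.sub
      (hF.expTrace {i})).differentiableAt_normalizedMellin_update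
        (.sub_expTrace_singleton i F) (hmem w hw)).const_add _).differentiableWithinAt) hVopen
  have hsi := mem_mellinStrip_empty.1 hs i
  refine hleft.eqOn_of_preconnected_of_eventuallyEq hright hVconn
    (z₀ := s i) ⟨neg_one_lt_zero.trans hsi.1, hsi.2⟩ ?_ ⟨hz, hz'⟩
  have hnear : ∀ᶠ w in 𝓝 (s i), 0 < w.re ∧ w.re < 1 / (n : ℝ) :=
    (isOpen_Ioo.preimage Complex.continuous_re).mem_nhds hsi
  filter_upwards [hnear] with w hw
  have hsw := update_mem_mellinStrip (i := i) hs (by simpa using hw.1) hw.2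
  have htrace := normalizedMellin_expTrace_singleton_congr i F (s := s) hw.1 hsi.1
  rw [Function.update_eq_self] at htrace
  rw [h.eqOn hsw, normalizedMellin_sub hF (hF.expTrace _) hsw, htrace]
  ring

lemma expTrace_singleton (h : IsMellinContinuation F Ψ) (hF : DecayingSmooth F) (i : Fin n) :
    IsMellinContinuation (_root_.expTrace {i} F) fun s => Ψ (Function.update s i 0) where
  analyticOnNhd := by
    have hproj (j : Fin n) : AnalyticOnNhd ℂ (fun s : Fin n → ℂ => s j) (mellinDomain n) :=
      (ContinuousLinearMap.proj (R := ℂ) (φ := fun _ : Fin n => ℂ) j).analyticOnNhd _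
    refine h.analyticOnNhd.comp (AnalyticOnNhd.pi fun j => ?_) fun s hs => ?_
    · obtain rfl | hj := eq_or_ne j i
      · simpa using analyticOnNhd_const
      · simpa [hj] using hproj j
    · simpa [Finset.piecewise_singleton] using piecewise_zero_mem_mellinDomain hs {i}
  eqOn s hs := by
    have hn : (0 : ℝ) < 1 / n := by simpa using i.pos
    dsimp only
    rw [h.apply_update hF hs (by simp) (by simpa using hn),
      normalizedMellin_eq_zero_of_apply_eq_zero _ (Function.update_self i 0 s), add_zero]

lemma expTrace (h : IsMellinContinuation F Ψ) (hF : DecayingSmooth F) (J : Finset (Fin n)) :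
    IsMellinContinuation (_root_.expTrace J F) fun s => Ψ (J.piecewise 0 s) := by
  induction J using Finset.induction_on with
  | empty => simpa [expTrace_empty] using h
  | insert i J hi ih =>
    rw [expTrace_insert hi]
    simpa [Finset.piecewise_insert, J.update_piecewise_of_notMem _ _ hi] using
      ih.expTrace_singleton (hF.expTrace J) i

lemma pderivNeg (h : IsMellinContinuation F Ψ) (hF : DecayingSmooth F) (i : Fin n) :
    IsMellinContinuation (_root_.pderivNeg n i F) fun s => Ψ (s - Pi.single i 1) where
  analyticOnNhd := by
    refine h.analyticOnNhd.comp (analyticOnNhd_id.sub analyticOnNhd_const) fun s hs j => ?_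
    have hsingle : 0 ≤ ((Pi.single i 1 : Fin n → ℂ) j).re := by
      obtain rfl | hj := eq_or_ne j i <;> simp [*]
    simpa using (sub_le_self _ hsingle).trans_lt (hs j)
  eqOn s hs := by
    have hsi := mem_mellinStrip_empty.1 hs i
    have hE := hF.expTrace {i}
    dsimp only
    rw [sub_single_one_eq_update, h.apply_update hF hs (by simpa using hsi.1)
      (by simpa using (sub_one_lt _).trans hsi.2), ← sub_single_one_eq_update,
      (hF.sub hE).normalizedMellin_sub_single (.sub_expTrace_singleton i F) hs,
      pderivNeg_sub hF.differentiable hE.differentiable, pderivNeg_expTrace_self hF.contDiff,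
      normalizedMellin_sub (hF.pderivNeg i) hE hs, add_sub_cancel]

lemma pderivList (h : IsMellinContinuation F Ψ) (hF : DecayingSmooth F) (l : List (Fin n)) :
    IsMellinContinuation (_root_.pderivList n l F) fun s => Ψ (s - fun i => (l.count i : ℂ)) := by
  induction l with
  | nil => simpa [_root_.pderivList, ← Pi.zero_def] using h
  | cons i l ih =>
    have hcount (s : Fin n → ℂ) : s - Pi.single i 1 - (fun j => (l.count j : ℂ)) =
        s - fun j => ((i :: l).count j : ℂ) := by
      ext j
      obtain rfl | hj := eq_or_ne j i
      · simp only [Pi.sub_apply, Pi.single_eq_same, List.count_cons_self, Nat.cast_add,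
          Nat.cast_one]
        ring
      · simp [hj, hj.symm]
    simpa only [hcount, _root_.pderivList] using ih.pderivNeg (hF.pderivList l) i

lemma eq_zero_of_vanishesOnHyperplane (h : IsMellinContinuation F Ψ) (hF : DecayingSmooth F)
    {i : Fin n} (hi : VanishesOnHyperplane i F) {s : Fin n → ℂ} (hs : s ∈ mellinDomain n)
    (hsi : s i = 0) : Ψ s = 0 := by
  have hzero := h.expTrace hF {i}
  rw [hi.expTrace_singleton_eq_zero] at hzero
  have hs' : ({i} : Finset (Fin n)).piecewise 0 s = s := by
    rw [Finset.piecewise_singleton, Pi.zero_apply, ← hsi, Function.update_eq_self]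
  simpa [hs'] using hzero.unique zero hs

end IsMellinContinuation
end Continuation

lemma count_multiIndexList {n : ℕ} (k : Fin n → ℕ) (j : Fin n) :
    (multiIndexList n k).count j = k j := by
  have hcount : (List.count j ∘ fun i => List.replicate (k i) i) =
      fun i => if i = j then k i else 0 := by
    ext i
    simp [List.count_replicate]
  rw [multiIndexList, List.count_flatMap, hcount, ← List.ofFn_eq_map, List.sum_ofFn]
  simp

section CoordinateDivision
variable {ι 𝕜 E : Type*} [Fintype ι] [RCLike 𝕜] [NormedAddCommGroup E] [NormedSpace 𝕜 E]
  {Ψ : (ι → 𝕜) → E} {i : ι}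

lemma update_mem_ball_zero [DecidableEq ι] {u : ι → 𝕜} {z : 𝕜} {δ : ℝ} (hu : u ∈ Metric.ball 0 δ)
    (hz : z ∈ Metric.ball 0 δ) : Function.update u i z ∈ Metric.ball 0 δ := by
  have hδ := Metric.pos_of_mem_ball hu
  rw [mem_ball_zero_iff, pi_norm_lt_iff hδ] at hu ⊢
  intro j
  obtain rfl | hj := eq_or_ne j i
  · simpa using hz
  · simpa [hj] using hu j

lemma norm_sub_prod_smul_le_of_norm_fderiv_single_le [DecidableEq ι] {I : Finset ι}
    (hi : i ∉ I) {c : E} {ε δ : ℝ} (hΨ : ∀ v ∈ Metric.ball 0 δ, DifferentiableAt 𝕜 Ψ v)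
    (hzero : ∀ v ∈ Metric.ball 0 δ, v i = 0 → Ψ v = 0)
    (hderiv : ∀ v ∈ Metric.ball 0 δ,
      ‖fderiv 𝕜 Ψ v (Pi.single i 1) - (∏ j ∈ I, v j) • c‖ ≤ ε * ‖∏ j ∈ I, v j‖)
    {u : ι → 𝕜} (hu : u ∈ Metric.ball 0 δ) :
    ‖Ψ u - (∏ j ∈ insert i I, u j) • c‖ ≤ ε * ‖∏ j ∈ insert i I, u j‖ := by
  have hδ := Metric.pos_of_mem_ball hu
  have hui : u i ∈ Metric.ball 0 δ := by
    rw [mem_ball_zero_iff, pi_norm_lt_iff hδ] at hu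
    simpa using hu i
  have hline : ∀ z ∈ Metric.ball (0 : 𝕜) δ, Function.update u i z ∈ Metric.ball 0 δ :=
    fun z hz => update_mem_ball_zero hu hz
  have hprod (z : 𝕜) : ∏ j ∈ I, Function.update u i z j = ∏ j ∈ I, u j :=
    Finset.prod_congr rfl fun j hj => by rw [Function.update_of_ne (ne_of_mem_of_not_mem hj hi)]
  have hmean := (convex_ball (0 : 𝕜) δ).norm_image_sub_le_of_norm_hasDerivWithin_le
    (f := fun z => Ψ (Function.update u i z) - z • (∏ j ∈ I, u j) • c)
    (fun z hz => (((hΨ _ (hline z hz)).hasFDerivAt.comp_hasDerivAt z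
      (hasDerivAt_update u i z)).sub
        ((hasDerivAt_id z).smul_const ((∏ j ∈ I, u j) • c))).hasDerivWithinAt)
    (fun z hz => by simpa only [one_smul, hprod] using hderiv _ (hline z hz))
    (Metric.mem_ball_self hδ) hui
  rw [Function.update_eq_self, hzero _ (hline 0 (Metric.mem_ball_self hδ)) (by simp), zero_smul,
    sub_zero, sub_zero, sub_zero] at hmean
  rwa [Finset.prod_insert hi, mul_smul, norm_mul, mul_left_comm, mul_comm]

variable [CompleteSpace E]

lemma eventually_fderiv_single_eq_zero [DecidableEq ι] {j : ι} (hij : i ≠ j)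
    (hΨ : AnalyticAt 𝕜 Ψ 0) (hzero : ∀ᶠ u in 𝓝 0, u j = 0 → Ψ u = 0) :
    ∀ᶠ u in 𝓝 0, u j = 0 → fderiv 𝕜 Ψ u (Pi.single i 1) = 0 := by
  filter_upwards [hΨ.eventually_analyticAt, hzero.eventually_nhds] with u hu hzero_near huj
  have hline : ContinuousAt (fun z : 𝕜 => u + z • Pi.single i (1 : 𝕜)) 0 := by fun_prop
  have hvanish : (fun z : 𝕜 => Ψ (u + z • Pi.single i 1)) =ᶠ[𝓝 0] fun _ => 0 := by
    filter_upwards [hline.eventually (by simpa using hzero_near)] with z hz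
    exact hz (by simp [huj, hij.symm])
  exact (hu.differentiableAt.hasFDerivAt.hasLineDerivAt (Pi.single i 1)).unique
    ((hasDerivAt_const 0 0).congr_of_eventuallyEq hvanish)

lemma exists_isLittleO_sub_prod_smul (I : Finset ι) (hΨ : AnalyticAt 𝕜 Ψ 0)
    (hzero : ∀ i ∈ I, ∀ᶠ u in 𝓝 0, u i = 0 → Ψ u = 0) :
    ∃ c : E, (fun u => Ψ u - (∏ i ∈ I, u i) • c) =o[𝓝 0] fun u => ∏ i ∈ I, u i := by
  classical
  induction I using Finset.induction_on generalizing Ψ with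
  | empty =>
    refine ⟨Ψ 0, ?_⟩
    simpa [Asymptotics.isLittleO_one_iff, tendsto_sub_nhds_zero_iff] using hΨ.continuousAt.tendsto
  | insert i I hi ih =>
    have hderiv : AnalyticAt 𝕜 (fun u => fderiv 𝕜 Ψ u (Pi.single i 1)) 0 :=
      ((ContinuousLinearMap.apply 𝕜 E
        (Pi.single i 1 : ι → 𝕜)).analyticAt (fderiv 𝕜 Ψ 0)).comp (g := _) hΨ.fderiv
    obtain ⟨c, hc⟩ := ih hderiv fun j hj => eventually_fderiv_single_eq_zero
      (ne_of_mem_of_not_mem hj hi).symm hΨ (hzero j (Finset.mem_insert_of_mem hj))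
    refine ⟨c, Asymptotics.isLittleO_iff.2 fun ε hε => ?_⟩
    obtain ⟨δ, hδ, hball⟩ := Metric.eventually_nhds_iff_ball.1 (hΨ.eventually_analyticAt.and
      ((hzero i (Finset.mem_insert_self i I)).and (Asymptotics.isLittleO_iff.1 hc hε)))
    filter_upwards [Metric.ball_mem_nhds 0 hδ] with u hu
    exact norm_sub_prod_smul_le_of_norm_fderiv_single_le hi
      (fun v hv => (hball v hv).1.differentiableAt) (fun v hv => (hball v hv).2.1)
      (fun v hv => (hball v hv).2.2) hu

lemma exists_tendsto_prod_inv_smul (I : Finset ι) (hΨ : AnalyticAt 𝕜 Ψ 0)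
    (hzero : ∀ i ∈ I, ∀ᶠ u in 𝓝 0, u i = 0 → Ψ u = 0) :
    ∃ c : E, Tendsto (fun u => (∏ i ∈ I, (u i)⁻¹) • Ψ u) (𝓝[{u | ∀ i ∈ I, u i ≠ 0}] 0) (𝓝 c) := by
  obtain ⟨c, hc⟩ := exists_isLittleO_sub_prod_smul I hΨ hzero
  refine ⟨c, tendsto_sub_nhds_zero_iff.1 ?_⟩
  have hquot : Tendsto (fun u => (∏ i ∈ I, u i)⁻¹ • (Ψ u - (∏ i ∈ I, u i) • c))
      (𝓝[{u | ∀ i ∈ I, u i ≠ 0}] 0) (𝓝 0) :=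
    hc.tendsto_inv_smul_nhds_zero.mono_left nhdsWithin_le_nhds
  refine hquot.congr' (eventually_mem_nhdsWithin.mono fun u hu => ?_)
  dsimp only
  rw [Finset.prod_inv_distrib, smul_sub, inv_smul_smul₀ (Finset.prod_ne_zero_iff.2 hu)]

end CoordinateDivision

section Limit
variable {n : ℕ} {F : (Fin n → ℝ) → ℂ} {Ψ : (Fin n → ℂ) → ℂ} {I : Finset (Fin n)}

lemma prod_inv_mul_normalizedMellin {ι : Type*} [Fintype ι] (G : (ι → ℝ) → ℂ) {s : ι → ℂ}
    (hs : ∀ i, s i ≠ 0) :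
    (∏ i, (s i)⁻¹) * normalizedMellin G s =
      (∏ i, (Complex.Gamma (s i + 1))⁻¹) * ∫ y, G y * mellinKernel s y ∂orthantMeasure ι := by
  rw [normalizedMellin, ← mul_assoc, ← Finset.prod_mul_distrib]
  simp only [Complex.Gamma_add_one _ (hs _), mul_inv]

lemma mellinKernel_zero {ι : Type*} [Fintype ι] (y : ι → ℝ) :
    mellinKernel 0 y = ∏ i, (y i : ℂ)⁻¹ := by
  simp [mellinKernel, Complex.cpow_neg_one]

lemma DecayingSmooth.continuousAt_integral_faceRestriction (hF : DecayingSmooth F)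
    (hI : ∀ i ∈ I, VanishesOnHyperplane i F) :
    ContinuousAt (fun z : ℂ => ∫ t, faceRestriction I F t * mellinKernel (fun _ => z) t
      ∂orthantMeasure {i // i ∈ I}) 0 := by
  obtain ⟨s, hs⟩ := mellinStrip_nonempty (∅ : Finset (Fin n))
  have hs_pos := mem_mellinStrip_empty.1 hs
  have hs₀ : I.piecewise (fun _ => 0) s ∈ mellinStrip I := fun i => by
    have := i.pos
    by_cases hi : i ∈ I
    · simpa [hi]
    · simpa [hi] using hs_pos i
  have hGamma : ∏ i ∈ Iᶜ, Complex.Gamma (s i) ≠ 0 :=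
    Finset.prod_ne_zero_iff.2 fun i _ => Complex.Gamma_ne_zero_of_re_pos (hs_pos i).1
  have hfubini (z : ℂ) := integral_expTrace_compl_mul_mellinKernel I F
    (s := I.piecewise (fun _ => z) s) fun i hi => by simpa [hi] using (hs_pos i).1
  have hprod (z : ℂ) : ∏ i ∈ Iᶜ, Complex.Gamma (I.piecewise (fun _ => z) s i) =
      ∏ i ∈ Iᶜ, Complex.Gamma (s i) :=
    Finset.prod_congr rfl fun i hi => by
      rw [I.piecewise_eq_of_notMem _ _ (Finset.mem_compl.1 hi)]
  have hcont := ((hF.expTrace Iᶜ).differentiableAt_integral_piecewise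
    (fun i hi => (hI i hi).expTrace Iᶜ) I hs₀).continuousAt.div_const
      (∏ i ∈ Iᶜ, Complex.Gamma (s i))
  simpa [hfubini, hprod, hGamma] using hcont

lemma IsMellinContinuation.apply_piecewise_compl (h : IsMellinContinuation F Ψ)
    (hF : DecayingSmooth F) {s : Fin n → ℂ} (hs : s ∈ mellinStrip ∅) :
    Ψ (Iᶜ.piecewise 0 s) = normalizedMellin (faceRestriction I F) (fun i => s i) := by
  rw [← normalizedMellin_expTrace_compl I F fun i _ => (mem_mellinStrip_empty.1 hs i).1,
    ← (h.expTrace hF Iᶜ).eqOn hs]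

lemma IsMellinContinuation.tendsto_prod_inv_mul_diagonal (h : IsMellinContinuation F Ψ)
    (hF : DecayingSmooth F) (hI : ∀ i ∈ I, VanishesOnHyperplane i F) :
    Tendsto (fun x : ℝ => (∏ _i ∈ I, (x : ℂ)⁻¹) * Ψ (I.piecewise (fun _ => (x : ℂ)) 0)) (𝓝[>] 0)
      (𝓝 (∫ t, faceRestriction I F t * mellinKernel 0 t ∂orthantMeasure {i // i ∈ I})) := by
  have hGamma : ContinuousAt (fun z : ℂ => ∏ _i : {i // i ∈ I}, (Complex.Gamma (z + 1))⁻¹) 0 :=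
    (continuous_finsetProd _ fun _ _ => Complex.differentiable_one_div_Gamma.continuous.comp
      (continuous_add_const 1)).continuousAt
  have hlim : Tendsto (fun z : ℂ => (∏ _i : {i // i ∈ I}, (Complex.Gamma (z + 1))⁻¹) *
      ∫ t, faceRestriction I F t * mellinKernel (fun _ => z) t ∂orthantMeasure {i // i ∈ I}) (𝓝 0)
      (𝓝 (∫ t, faceRestriction I F t * mellinKernel 0 t ∂orthantMeasure {i // i ∈ I})) := by
    simpa [← Pi.zero_def] using
      (hGamma.fun_mul (hF.continuousAt_integral_faceRestriction hI)).tendsto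
  have hpath : Tendsto (fun x : ℝ => (x : ℂ)) (𝓝[>] 0) (𝓝 0) :=
    (Complex.continuous_ofReal.tendsto' 0 0 Complex.ofReal_zero).mono_left nhdsWithin_le_nhds
  have hstrip : ∀ᶠ x : ℝ in 𝓝[>] 0, (fun _ => (x : ℂ)) ∈ mellinStrip (∅ : Finset (Fin n)) := by
    simp only [mem_mellinStrip_empty, eventually_all]
    intro i
    have := i.pos
    exact Ioo_mem_nhdsGT (by positivity : (0 : ℝ) < 1 / n)
  refine (hlim.comp hpath).congr' ?_
  filter_upwards [hstrip, self_mem_nhdsWithin] with x hx hx_pos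
  have hx0 : (x : ℂ) ≠ 0 := Complex.ofReal_ne_zero.2 (mem_Ioi.1 hx_pos).ne'
  dsimp only [Function.comp]
  rw [← Finset.piecewise_compl, h.apply_piecewise_compl hF hx, ← Finset.prod_coe_sort I,
    prod_inv_mul_normalizedMellin (s := fun _ => (x : ℂ)) _ fun _ => hx0]

theorem IsMellinContinuation.tendsto_prod_inv_mul (h : IsMellinContinuation F Ψ)
    (hF : DecayingSmooth F) (hI : ∀ i ∈ I, VanishesOnHyperplane i F) :
    Tendsto (fun s => (∏ i ∈ I, (s i)⁻¹) * Ψ s) (𝓝[{s | ∀ i ∈ I, s i ≠ 0}] 0)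
      (𝓝 (∫ t, faceRestriction I F t * mellinKernel 0 t ∂orthantMeasure {i // i ∈ I})) := by
  have hnear : mellinDomain n ∈ 𝓝 0 := isOpen_mellinDomain.mem_nhds zero_mem_mellinDomain
  obtain ⟨c, hc⟩ := exists_tendsto_prod_inv_smul I (h.analyticOnNhd 0 zero_mem_mellinDomain)
    fun i hi => eventually_of_mem hnear fun s hs hsi =>
      h.eq_zero_of_vanishesOnHyperplane hF (hI i hi) hs hsi
  have hpath : Tendsto (fun x : ℝ => I.piecewise (fun _ => (x : ℂ)) 0) (𝓝[>] 0)
      (𝓝[{s | ∀ i ∈ I, s i ≠ 0}] 0) := by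
    refine tendsto_nhdsWithin_iff.2 ⟨?_, ?_⟩
    · exact ((continuous_piecewise_ofReal I 0).tendsto' 0 0
        (by ext i; by_cases hi : i ∈ I <;> simp [hi])).mono_left nhdsWithin_le_nhds
    · filter_upwards [self_mem_nhdsWithin] with x hx i hi
      simpa [hi] using (mem_Ioi.1 hx).ne'
  have hdiag := hc.comp hpath
  rw [tendsto_nhds_unique (h.tendsto_prod_inv_mul_diagonal hF hI) (hdiag.congr fun x => ?_)]
  · exact hc
  · rw [Function.comp, smul_eq_mul]
    congr 1
    exact Finset.prod_congr rfl fun i hi => by simp [hi]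

end Limit

/-- with `H` as in Statement 16, `k ∈ ℕ^n` and `I ⊂ {1,…,n}` such that
`∂^k H` vanishes identically on each hyperplane `{y_i = 0}`, `i ∈ I`: for any analytic
continuation `Φ` of `Λ(H,·)` to `{Re s_i < 1/n}`, one has
`lim_{s → -k} (∏_{i∈I} (s_i+k_i)^{-1}) Λ(H,s)
  = ∫_{(ℝ_{≥0})^I} ∂^k H(y_I, 0_{I^c}) ∏_{i∈I} dy_i/y_i`. -/
theorem mellin_limit_at_neg_integers
    (n : ℕ) (hn : 0 < n) (H : (Fin n → ℝ) → ℂ)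
    (hsmooth : ContDiff ℝ (⊤ : ℕ∞) H)
    (hdecay : ∀ l : List (Fin n), SufficientDecayOn n (Quadrant n) (pderivList n l H))
    (k : Fin n → ℕ) (I : Finset (Fin n))
    (hvan : ∀ i ∈ I, ∀ y : Fin n → ℝ, y i = 0 →
      pderivList n (multiIndexList n k) H y = 0)
    (Φ : (Fin n → ℂ) → ℂ)
    (hΦan : AnalyticOnNhd ℂ Φ {s : Fin n → ℂ | ∀ i, (s i).re < 1 / n})
    (hΦeq : ∀ s : Fin n → ℂ, (∀ i, 0 < (s i).re ∧ (s i).re < 1 / n) →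
      Φ s = (∏ i, (Complex.Gamma (s i))⁻¹) *
          ∫ y in Quadrant n, H y * ∏ i, ((y i : ℂ) ^ (s i - 1))) :
    Filter.Tendsto
      (fun s : Fin n → ℂ => (∏ i ∈ I, (s i + (k i : ℂ))⁻¹) * Φ s)
      (nhdsWithin (fun i => -(k i : ℂ))
        {s : Fin n → ℂ | ∀ i ∈ I, s i ≠ -(k i : ℂ)})
      (nhds (∫ t : {i // i ∈ I} → ℝ in {t | ∀ j, 0 ≤ t j},
        pderivList n (multiIndexList n k) H
            (fun i => if h : i ∈ I then t ⟨i, h⟩ else 0) *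
          ∏ j : {i // i ∈ I}, ((t j : ℂ))⁻¹)) := by
  have hF : DecayingSmooth H := ⟨hsmooth, fun l => (hdecay l).hasDecay⟩
  have hΨ : IsMellinContinuation H Φ := ⟨hΦan, fun s hs => by
    rw [hΦeq s (mem_mellinStrip_empty.1 hs), normalizedMellin, Quadrant,
      volume_restrict_setOf_nonneg]
    rfl⟩
  have hlim := (hΨ.pderivList hF (multiIndexList n k)).tendsto_prod_inv_mul
    (hF.pderivList _) hvan
  have hshift : Tendsto (fun s : Fin n → ℂ => fun i => s i + (k i : ℂ))
      (𝓝[{s | ∀ i ∈ I, s i ≠ -(k i : ℂ)}] fun i => -(k i : ℂ)) (𝓝[{s | ∀ i ∈ I, s i ≠ 0}] 0) := by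
    refine tendsto_nhdsWithin_iff.2 ⟨?_, ?_⟩
    · have hcont : Continuous fun s : Fin n → ℂ => fun i => s i + (k i : ℂ) := by fun_prop
      exact (hcont.tendsto' _ _ (by ext; simp)).mono_left nhdsWithin_le_nhds
    · filter_upwards [self_mem_nhdsWithin] with s hs i hi
      exact fun h => hs i hi (eq_neg_of_add_eq_zero_left h)
  simp only [count_multiIndexList, mellinKernel_zero, ← volume_restrict_setOf_nonneg] at hlim
  refine (hlim.comp hshift).congr fun s => ?_
  simp [Function.comp, Pi.sub_def]
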